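/- arXiv:2003.04990 — 9 statements merged into one kernel-verified Lean document; each statement's English description precedes it below -/
import Mathlib

section
/- Let d ≥ 1 be an integer. For all sufficiently large N (in terms of d), the hat guessing number of the graph G_d(N) equals s_d − 1, where s_d is the d-th term of Sylvester's sequence. -/
/-- A winning guessing strategy in the hat guessing game on `G` with `q` colors:
each vertex `v` gets a guessing function from colorings of its open neighborhood
to colors, such that for every coloring some vertex guesses its own color. -/
def HatWinning {V : Type*} (G : SimpleGraph V) (q : ℕ) : Prop :=
  ∃ g : (v : V) → ({w : V // G.Adj v w} → Fin q) → Fin q,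
    ∀ χ : V → Fin q, ∃ v : V, g v (fun w => χ w.1) = χ v

/-- The hat guessing number of `G`: the largest number of colors for which the
players have a winning strategy. -/
noncomputable def hatGuessingNumber {V : Type*} (G : SimpleGraph V) : ℕ :=
  sSup {q : ℕ | HatWinning G q}

/-- Sylvester's sequence: `s 0 = 2`, `s (n+1) = s n ^ 2 - s n + 1`. -/
def sylvester : ℕ → ℕ
  | 0 => 2
  | n + 1 => sylvester n ^ 2 - sylvester n + 1

/-- The graph `G_d(N)`: vertices are the vertices of the complete rooted `N`-ary
tree of depth `d` (encoded as lists of child-indices of length at most `d`), and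
each vertex is adjacent to all of its ancestors (its proper prefixes). -/
def ancTree (d N : ℕ) : SimpleGraph {l : List (Fin N) // l.length ≤ d} where
  Adj v w := v ≠ w ∧ (v.1 <+: w.1 ∨ w.1 <+: v.1)
  symm := by
    constructor
    intro v w h
    exact ⟨h.1.symm, h.2.symm⟩
  loopless := by
    constructor
    intro v h
    exact h.1 rfl

/-- The book graph `B_{d,n}`: a spine of `d` vertices forming a clique, completely
joined to `n` pages forming an independent set. -/
def bookGraph (d n : ℕ) : SimpleGraph (Fin d ⊕ Fin n) where
  Adj x y := x ≠ y ∧ (x.isLeft ∨ y.isLeft)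
  symm := by
    constructor
    intro x y h
    exact ⟨h.1.symm, h.2.symm⟩
  loopless := by
    constructor
    intro x h
    exact h.1 rfl

/-- A set `S ⊆ ℕ^d` is coverable if it can be partitioned into parts `S_1, …, S_d`
such that `S_i` contains at most one point on every line parallel to the `i`-th
coordinate axis, i.e. two distinct points in part `i` differ in some coordinate
other than the `i`-th. -/
def Coverable {d : ℕ} (S : Set (Fin d → ℕ)) : Prop :=
  ∃ f : (Fin d → ℕ) → Fin d, ∀ x ∈ S, ∀ y ∈ S,
    x ≠ y → f x = f y → ∃ j : Fin d, j ≠ f x ∧ x j ≠ y j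

/-- `hcov d` is `h(ℕ^d)`: the largest `t` such that every `t`-element subset of
`ℕ^d` is coverable. -/
noncomputable def hcov (d : ℕ) : ℕ :=
  sSup {t : ℕ | ∀ S : Set (Fin d → ℕ), S.Finite → S.ncard = t → Coverable S}

/-- `p` is a left-to-right path with `k` edges in a graph on `Fin n` with the
natural vertex ordering: a strictly increasing sequence of `k+1` vertices in which
consecutive vertices are adjacent. -/
def IsLTRPath {n : ℕ} (G : SimpleGraph (Fin n)) (k : ℕ) (p : Fin (k + 1) → Fin n) : Prop :=
  StrictMono p ∧ ∀ i : Fin k, G.Adj (p i.castSucc) (p i.succ)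

/-- The depth of a vertex `v`: the largest number of edges in a left-to-right path
ending at `v`. -/
noncomputable def ltrDepth {n : ℕ} (G : SimpleGraph (Fin n)) (v : Fin n) : ℕ :=
  sSup {k : ℕ | ∃ p : Fin (k + 1) → Fin n, IsLTRPath G k p ∧ p (Fin.last k) = v}

section Sylvester

lemma two_le_sylvester (n : ℕ) : 2 ≤ sylvester n := by
  induction n with
  | zero => simp [sylvester]
  | succ n ih =>
    have : sylvester n + 1 ≤ sylvester n ^ 2 := by nlinarith
    simp only [sylvester]
    omega

lemma sylvester_succ_sub_one (n : ℕ) :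
    sylvester (n + 1) - 1 = (sylvester n - 1) * sylvester n := by
  simp only [sylvester, Nat.add_sub_cancel, Nat.sub_mul, one_mul, sq]

lemma sylvester_mono : Monotone sylvester := by
  refine monotone_nat_of_le_succ fun n => ?_
  have h := sylvester_succ_sub_one n
  have h2 := two_le_sylvester n
  have : 1 * sylvester n ≤ (sylvester n - 1) * sylvester n :=
    Nat.mul_le_mul_right _ (by omega)
  omega

lemma prod_sylvester (k : ℕ) : ∏ j : Fin k, sylvester j = sylvester k - 1 := by
  induction k with
  | zero => simp [sylvester]
  | succ k ih =>
    rw [Fin.prod_univ_castSucc, sylvester_succ_sub_one]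
    simp [ih]

end Sylvester

section UpperBound

/-- For every strategy and every level `k`, the adversary can fix the colors at depth at least `k`
so that all these vertices guess wrong, as long as each vertex of depth `j < k` gets one of its
first `sylvester j` colors. -/
lemma exists_coloring_wrong_of_sylvester_le {d N q : ℕ} (hq : sylvester d ≤ q)
    (g : (v : {l : List (Fin N) // l.length ≤ d}) →
      ({w // (ancTree d N).Adj v w} → Fin q) → Fin q)
    {k m : ℕ} (hk : k + m = d + 1) :
    ∃ χ : {l : List (Fin N) // l.length ≤ d} → Fin q,
      ∀ χ' : {l : List (Fin N) // l.length ≤ d} → Fin q,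
      (∀ v, k ≤ v.1.length → χ' v = χ v) →
      (∀ v, v.1.length < k → (χ' v : ℕ) < sylvester v.1.length) →
      ∀ v, k ≤ v.1.length → g v (fun w => χ' w.1) ≠ χ' v := by
  induction m generalizing k with
  | zero =>
    have hq0 : 0 < q := by have := two_le_sylvester d; omega
    exact ⟨fun _ => ⟨0, hq0⟩, fun χ' _ _ v hv => absurd v.2 (by omega)⟩
  | succ m ih =>
    obtain ⟨χ, hχ⟩ := ih (k := k + 1) (by omega)
    have hle : ∀ {j}, j ≤ d → sylvester j ≤ q := fun hj => (sylvester_mono hj).trans hq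
    have hfree : ∀ v : {l : List (Fin N) // l.length ≤ d}, ∃ y : Fin q,
        (y : ℕ) < sylvester k ∧ ∀ a : (j : Fin k) → Fin (sylvester j),
          g v (fun w => if h : w.1.1.length < k then
            Fin.castLE (hle w.1.2) (a ⟨w.1.1.length, h⟩) else χ w.1) ≠ y := by
      intro v
      by_contra! hcon
      choose a ha using fun y : Fin (sylvester k) => hcon (Fin.castLE (hle (by omega)) y) y.2
      have hinj : Function.Injective a := by
        intro y y' h
        have hy := ha y
        rw [h] at hy
        exact Fin.castLE_injective _ (hy.symm.trans (ha y'))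
      have hcard := Fintype.card_le_of_injective _ hinj
      rw [Fintype.card_pi, Fintype.card_fin] at hcard
      simp only [Fintype.card_fin, prod_sylvester] at hcard
      have := two_le_sylvester k
      omega
    choose y hy hfree using hfree
    refine ⟨fun v => if v.1.length = k then y v else χ v, fun χ' hagree hsmall => ?_⟩
    beta_reduce at hagree
    intro v hv
    rcases hv.eq_or_lt with hv | hv
    · have hself : χ' v = y v := by rw [hagree v hv.le, if_pos hv.symm]
      rw [hself]
      have hlen : ∀ j : Fin k, (v.1.take j).length = j := fun j => by
        rw [List.length_take]; omega
      let p : Fin k → {l : List (Fin N) // l.length ≤ d} := fun j =>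
        ⟨v.1.take j, by rw [hlen]; omega⟩
      convert hfree v (fun j => ⟨χ' (p j), by
        have := hsmall (p j) (by simp only [p, hlen]; omega)
        simpa only [p, hlen] using this⟩) using 2
      funext ⟨w, hne, hw⟩
      change χ' w = if h : w.1.length < k then _ else χ w
      split_ifs with h
      · have hwv : w.1 <+: v.1 := by
          rcases hw with hw | hw
          · have := hw.length_le
            omega
          · exact hw
        have hpw : p ⟨w.1.length, h⟩ = w :=
          Subtype.ext (List.prefix_iff_eq_take.mp hwv).symm
        ext
        simp [hpw]
      · have hwk : w.1.length ≠ k := by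
          intro hwk
          apply hne
          apply Subtype.ext
          rcases hw with hw | hw
          · exact hw.eq_of_length (by omega)
          · exact (hw.eq_of_length (by omega)).symm
        rw [hagree w (by omega), if_neg hwk]
    · refine hχ χ' (fun w hw => ?_) (fun w hw => ?_) v hv
      · rw [hagree w (by omega), if_neg (by omega)]
      · rcases (Nat.lt_succ_iff.mp hw).eq_or_lt with hwk | hwk
        · rw [hagree w hwk.ge, if_pos hwk, hwk]
          exact hy w
        · exact hsmall w hwk

lemma HatWinning.lt_sylvester {d N q : ℕ} (h : HatWinning (ancTree d N) q) :
    q < sylvester d := by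
  by_contra! hq
  obtain ⟨g, hg⟩ := h
  obtain ⟨χ, hχ⟩ := exists_coloring_wrong_of_sylvester_le hq g (zero_add (d + 1))
  obtain ⟨v, hv⟩ := hg χ
  exact hχ χ (fun _ _ => rfl) (fun v hv => absurd hv (Nat.not_lt_zero _)) v (Nat.zero_le _) hv

end UpperBound

section LowerBound

open Classical in
/-- There is a uniform way to enumerate any `Y` by any `Z` that is at least as large. -/
lemma exists_covering_function (α β : Type*) [Nonempty β] :
    ∃ γ : Finset β → Finset α → α → β, ∀ Y Z, Y.card ≤ Z.card →
      ∀ y ∈ Y, ∃ z ∈ Z, γ Y Z z = y := by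
  have : ∀ (Y : Finset β) (Z : Finset α), ∃ f : α → β, Y.card ≤ Z.card →
      ∀ y ∈ Y, ∃ z ∈ Z, f z = y := by
    intro Y Z
    by_cases h : Y.card ≤ Z.card
    · obtain ⟨e⟩ : Nonempty (Y ↪ Z) := Function.Embedding.nonempty_of_card_le (by simpa using h)
      refine ⟨fun a => if ha : ∃ y : Y, (e y : α) = a then ha.choose else Classical.arbitrary β,
        fun _ y hy => ⟨e ⟨y, hy⟩, (e ⟨y, hy⟩).2, ?_⟩⟩
      have ha : ∃ y' : Y, (e y' : α) = e ⟨y, hy⟩ := ⟨_, rfl⟩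
      beta_reduce
      rw [dif_pos ha]
      have := e.injective (Subtype.ext ha.choose_spec)
      rw [this]
    · exact ⟨fun _ => Classical.arbitrary β, fun h' => absurd h' h⟩
  choose γ hγ using this
  exact ⟨γ, hγ⟩

variable {N q : ℕ}

/-- Recolor the prefixes of `l` of length less than `k` by `z`. -/
def recolorPrefixes (k : ℕ) (l : List (Fin N)) (z : Fin k → Fin q)
    (χ : List (Fin N) → Fin q) : List (Fin N) → Fin q :=
  fun x => if h : x.length < k ∧ x <+: l then z ⟨x.length, h.1⟩ else χ x

lemma recolorPrefixes_concat (l : List (Fin N)) (i : Fin N) (z : Fin (l.length + 1) → Fin q)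
    (χ : List (Fin N) → Fin q) :
    recolorPrefixes (l.length + 1) (l ++ [i]) z χ = recolorPrefixes (l.length + 1) l z χ := by
  funext x
  have : (x.length < l.length + 1 ∧ x <+: l ++ [i]) ↔ (x.length < l.length + 1 ∧ x <+: l) :=
    and_congr_right fun hx => by
      rw [List.prefix_concat_iff, or_iff_right]
      rintro rfl
      simp at hx
  simp only [recolorPrefixes, this]

lemma recolorPrefixes_recolorPrefixes {k : ℕ} (l : List (Fin N)) (z : Fin k → Fin q)
    (z' : Fin (k + 1) → Fin q) (χ : List (Fin N) → Fin q) :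
    recolorPrefixes (k + 1) l z' (recolorPrefixes k l z χ) = recolorPrefixes (k + 1) l z' χ := by
  funext x
  unfold recolorPrefixes
  split_ifs with h h' <;> first | rfl | skip
  exact absurd ⟨h'.1.trans (Nat.lt_succ_self k), h'.2⟩ h

lemma recolorPrefixes_self {k : ℕ} {l : List (Fin N)} (hl : l.length = k) (z : Fin k → Fin q)
    (χ : List (Fin N) → Fin q) : recolorPrefixes k l z χ l = χ l := by
  simp [recolorPrefixes, hl]

lemma recolorPrefixes_take {k : ℕ} {l : List (Fin N)} (hl : l.length = k) (z : Fin k → Fin q)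
    (χ : List (Fin N) → Fin q) (j : Fin k) : recolorPrefixes k l z χ (l.take j) = z j := by
  have hlen : (l.take j).length = j := by rw [List.length_take]; omega
  simp [recolorPrefixes, hlen, List.take_prefix]

lemma recolorPrefixes_snoc {k : ℕ} {l : List (Fin N)} (hl : l.length = k) (z : Fin k → Fin q)
    (χ : List (Fin N) → Fin q) :
    recolorPrefixes (k + 1) l (Fin.snoc z (χ l) : Fin (k + 1) → Fin q) χ =
      recolorPrefixes k l z χ := by
  funext x
  unfold recolorPrefixes
  by_cases hx : x <+: l
  · rcases lt_trichotomy x.length k with h | h | h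
    · simp [hx, h, h.trans (Nat.lt_succ_self k), Fin.snoc]
    · obtain rfl : x = l := hx.eq_of_length (h.trans hl.symm)
      simp [h, Fin.snoc]
    · have := hx.length_le
      omega
  · simp [hx]

open Classical in
/-- The colors `y` of `l` such that, for every `z ∈ Z`, property `P` holds once the proper
ancestors of `l` are colored by `z` and `l` is colored by `y`. -/
noncomputable def survivingColors {k : ℕ} (Z : Finset (Fin k → Fin q)) (l : List (Fin N))
    (P : (List (Fin N) → Fin q) → Prop) (χ : List (Fin N) → Fin q) : Finset (Fin q) :=
  Finset.univ.filter fun y =>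
    ∀ z ∈ Z, P (recolorPrefixes (k + 1) l (Fin.snoc z y : Fin (k + 1) → Fin q) χ)

lemma survivingColors_recolorPrefixes {k : ℕ} (Z : Finset (Fin k → Fin q)) (l : List (Fin N))
    (P : (List (Fin N) → Fin q) → Prop) (z : Fin k → Fin q) (χ : List (Fin N) → Fin q) :
    survivingColors Z l P (recolorPrefixes k l z χ) = survivingColors Z l P χ := by
  ext y
  simp [survivingColors, recolorPrefixes_recolorPrefixes]

variable (Z : (k : ℕ) → List (Fin N) → Finset (Fin k → Fin q))
  (γ : (k : ℕ) → Finset (Fin q) → Finset (Fin k → Fin q) → (Fin k → Fin q) → Fin q)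

/-- The guess of the vertex `l` of depth `k`, where `P` states that all its proper descendants
guess wrong: enumerate the surviving colors by the ancestor colorings in `Z k l`. -/
noncomputable def treeGuess (k : ℕ) (l : List (Fin N)) (P : (List (Fin N) → Fin q) → Prop)
    (χ : List (Fin N) → Fin q) : Fin q :=
  γ k (survivingColors (Z k l) l P χ) (Z k l) fun j => χ (l.take j)

/-- All vertices in the first `h` levels of the subtree rooted at `l` guess wrong; `k` is the
depth of `l`. -/
def AllWrong : ℕ → (k : ℕ) → List (Fin N) → (List (Fin N) → Fin q) → Prop
  | 0, _, _, _ => True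
  | h + 1, k, l, χ =>
    treeGuess Z γ k l (fun χ' => ∀ i, AllWrong h (k + 1) (l ++ [i]) χ') χ ≠ χ l ∧
      ∀ i, AllWrong h (k + 1) (l ++ [i]) χ

/-- All proper descendants of `l` in the `h` levels below `l` guess wrong. -/
def DescendantsWrong (h k : ℕ) (l : List (Fin N)) (χ : List (Fin N) → Fin q) : Prop :=
  ∀ i, AllWrong Z γ h (k + 1) (l ++ [i]) χ

lemma allWrong_succ (h k : ℕ) (l : List (Fin N)) (χ : List (Fin N) → Fin q) :
    AllWrong Z γ (h + 1) k l χ ↔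
      treeGuess Z γ k l (DescendantsWrong Z γ h k l) χ ≠ χ l ∧ DescendantsWrong Z γ h k l χ :=
  Iff.rfl

/-- The guess at `l` ignores the color of `l` and of the vertices not comparable to `l`, provided
the guesses below do. -/
lemma treeGuess_congr_of_allWrong_congr {h k : ℕ} {l : List (Fin N)} (hl : l.length = k)
    (ih : ∀ i, ∀ χ χ' : List (Fin N) → Fin q,
      (∀ x, x.length < k + 1 + h → (x <+: l ++ [i] ∨ l ++ [i] <+: x) → χ x = χ' x) →
      (AllWrong Z γ h (k + 1) (l ++ [i]) χ ↔ AllWrong Z γ h (k + 1) (l ++ [i]) χ'))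
    {χ χ' : List (Fin N) → Fin q}
    (hχ : ∀ x, x.length < k + (h + 1) → x ≠ l → (x <+: l ∨ l <+: x) → χ x = χ' x) :
    treeGuess Z γ k l (DescendantsWrong Z γ h k l) χ =
      treeGuess Z γ k l (DescendantsWrong Z γ h k l) χ' := by
  have hY : survivingColors (Z k l) l (DescendantsWrong Z γ h k l) χ =
      survivingColors (Z k l) l (DescendantsWrong Z γ h k l) χ' := by
    unfold survivingColors
    congr 1
    funext y
    refine propext (forall₂_congr fun z _ => forall_congr' fun i => ih i _ _ fun x hx hxl => ?_)
    unfold recolorPrefixes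
    split_ifs with hp
    · rfl
    · rw [not_and] at hp
      rcases hxl with hxl | hxl
      · rcases List.prefix_concat_iff.mp hxl with rfl | hxl
        · exact hχ _ (by omega) (by simp) (Or.inr (List.prefix_append _ _))
        · exact absurd hxl (hp (by have := hxl.length_le; omega))
      · refine hχ x (by omega) ?_ (Or.inr ((List.prefix_append _ _).trans hxl))
        rintro rfl
        have := hxl.length_le
        simp at this
  unfold treeGuess
  rw [hY]
  congr 1
  funext j
  have hlen : (l.take j).length = j := by rw [List.length_take]; omega
  refine hχ _ (by omega) (fun h => ?_) (Or.inl (List.take_prefix _ _))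
  rw [h] at hlen
  omega

lemma allWrong_congr {h k : ℕ} {l : List (Fin N)} (hl : l.length = k)
    {χ χ' : List (Fin N) → Fin q}
    (hχ : ∀ x, x.length < k + h → (x <+: l ∨ l <+: x) → χ x = χ' x) :
    AllWrong Z γ h k l χ ↔ AllWrong Z γ h k l χ' := by
  induction h generalizing k l χ χ' with
  | zero => exact Iff.rfl
  | succ h ih =>
    rw [allWrong_succ, allWrong_succ,
      treeGuess_congr_of_allWrong_congr Z γ hl (fun i _ _ => ih (by simp [hl]))
        (fun x hx _ hxl => hχ x hx hxl), hχ l (by omega) (Or.inl (List.prefix_refl l))]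
    refine and_congr Iff.rfl (forall_congr' fun i => ih (by simp [hl]) fun x hx hxl => ?_)
    refine hχ x (by omega) ?_
    rcases hxl with hxl | hxl
    · rcases List.prefix_concat_iff.mp hxl with rfl | hxl
      · exact Or.inr (List.prefix_append _ _)
      · exact Or.inl hxl
    · exact Or.inr ((List.prefix_append _ _).trans hxl)

lemma treeGuess_congr {h k : ℕ} {l : List (Fin N)} (hl : l.length = k)
    {χ χ' : List (Fin N) → Fin q}
    (hχ : ∀ x, x.length < k + (h + 1) → x ≠ l → (x <+: l ∨ l <+: x) → χ x = χ' x) :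
    treeGuess Z γ k l (DescendantsWrong Z γ h k l) χ =
      treeGuess Z γ k l (DescendantsWrong Z γ h k l) χ' :=
  treeGuess_congr_of_allWrong_congr Z γ hl
    (fun _ _ _ => allWrong_congr Z γ (by simp [hl])) hχ

lemma allWrong_of_forall_ne {d k h : ℕ} {l : List (Fin N)} (hl : l.length = k)
    (hk : k + h = d + 1) {χ : List (Fin N) → Fin q}
    (hχ : ∀ x : List (Fin N), x.length ≤ d → treeGuess Z γ x.length x
      (DescendantsWrong Z γ (d - x.length) x.length x) χ ≠ χ x) :
    AllWrong Z γ h k l χ := by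
  induction h generalizing k l with
  | zero => trivial
  | succ h ih =>
    refine ⟨?_, fun i => ih (by simp [hl]) (by omega)⟩
    have := hχ l (by omega)
    rwa [hl, show d - k = h by omega] at this

variable {Z γ}

/-- If the surviving colors at `l` can be enumerated by `Z k l`, then some coloring in `Z k l` of
the proper ancestors of `l` makes some vertex of the subtree at `l` guess right. -/
lemma exists_not_allWrong
    (hγ : ∀ k Y Z, Y.card ≤ Z.card → ∀ y ∈ Y, ∃ z ∈ Z, γ k Y Z z = y)
    {h k : ℕ} {l : List (Fin N)} (hl : l.length = k) (χ : List (Fin N) → Fin q)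
    (hY : (survivingColors (Z k l) l (DescendantsWrong Z γ h k l) χ).card ≤ (Z k l).card) :
    ∃ z ∈ Z k l, ¬ AllWrong Z γ (h + 1) k l (recolorPrefixes k l z χ) := by
  by_contra! hcon
  have hmem : χ l ∈ survivingColors (Z k l) l (DescendantsWrong Z γ h k l) χ := by
    simp only [survivingColors, Finset.mem_filter, Finset.mem_univ, true_and]
    intro z hz
    rw [recolorPrefixes_snoc hl]
    exact (hcon z hz).2
  obtain ⟨z, hz, hzy⟩ := hγ k _ _ hY _ hmem
  refine ((allWrong_succ ..).mp (hcon z hz)).1 ?_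
  rw [recolorPrefixes_self hl, ← hzy]
  simp only [treeGuess, survivingColors_recolorPrefixes, recolorPrefixes_take hl]

open Classical in
lemma card_survivingColors_le {d : ℕ} (hq : q = sylvester d - 1)
    (hZ : ∀ l : List (Fin N), l.length < d →
      ∀ Z' : Finset (Fin (l.length + 1) → Fin q), ∃ i, Z (l.length + 1) (l ++ [i]) = Z')
    (hγ : ∀ k Y Z, Y.card ≤ Z.card → ∀ y ∈ Y, ∃ z ∈ Z, γ k Y Z z = y)
    {h k : ℕ} (hk : k + h = d) {l : List (Fin N)} (hl : l.length = k)
    (hcard : (Z k l).card = sylvester k - 1) (χ : List (Fin N) → Fin q) :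
    (survivingColors (Z k l) l (DescendantsWrong Z γ h k l) χ).card ≤ (Z k l).card := by
  induction h generalizing k l χ with
  | zero =>
    obtain rfl : k = d := hk
    rw [hcard, ← hq]
    exact (Finset.card_le_univ _).trans_eq (Fintype.card_fin q)
  | succ h ih =>
    subst hl
    set Y := survivingColors (Z l.length l) l (DescendantsWrong Z γ (h + 1) l.length l) χ with hYdef
    set W : Finset (Fin (l.length + 1) → Fin q) := Finset.univ.filter fun z =>
      DescendantsWrong Z γ (h + 1) l.length l (recolorPrefixes (l.length + 1) l z χ) with hW
    have hWcard : W.card < sylvester (l.length + 1) - 1 := by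
      by_contra! hcon
      obtain ⟨Z', hZ'W, hZ'⟩ := Finset.exists_subset_card_eq hcon
      obtain ⟨i, rfl⟩ := hZ l (by omega) Z'
      have hlen : (l ++ [i]).length = l.length + 1 := by simp
      obtain ⟨z, hz, hzw⟩ := exists_not_allWrong hγ hlen χ (ih (by omega) hlen hZ' χ)
      refine hzw ?_
      have := (Finset.mem_filter.mp (hZ'W hz)).2 i
      rwa [recolorPrefixes_concat]
    have hYW : Y.card * (Z l.length l).card ≤ W.card := by
      rw [← Finset.card_product]
      refine Finset.card_le_card_of_injOn
        (fun p => (Fin.snoc p.2 p.1 : Fin (l.length + 1) → Fin q)) ?_ ?_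
      · rintro ⟨y, z⟩ hp
        rw [Finset.mem_coe, Finset.mem_product] at hp
        simp only [hW, Finset.coe_filter, Finset.mem_univ, true_and, Set.mem_ofPred_eq]
        exact (Finset.mem_filter.mp hp.1).2 z hp.2
      · rintro ⟨y, z⟩ - ⟨y', z'⟩ - hp
        obtain ⟨rfl, rfl⟩ := Fin.snoc_inj.mp hp
        rfl
    rw [sylvester_succ_sub_one] at hWcard
    have h2 := two_le_sylvester l.length
    rw [hcard] at hYW ⊢
    rw [mul_comm] at hYW
    have := lt_of_mul_lt_mul_left (hYW.trans_lt hWcard) (Nat.zero_le _)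
    omega

lemma hatWinning_ancTree {d N : ℕ} (hN : 2 ^ (sylvester d - 1) ^ d ≤ N) :
    HatWinning (ancTree d N) (sylvester d - 1) := by
  classical
  obtain ⟨q, hq⟩ : ∃ q, q = sylvester d - 1 := ⟨_, rfl⟩
  rw [← hq] at hN ⊢
  have hq0 : 0 < q := by have := two_le_sylvester d; omega
  have : Nonempty (Fin q) := ⟨⟨0, hq0⟩⟩
  have : NeZero q := ⟨hq0.ne'⟩
  choose γ hγ using fun k => exists_covering_function (Fin k → Fin q) (Fin q)
  have hT : ∀ k, ∃ T : Fin N → Finset (Fin k → Fin q), k ≤ d → Function.Surjective T := by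
    intro k
    by_cases hk : k ≤ d
    · have : Fintype.card (Finset (Fin k → Fin q)) ≤ Fintype.card (Fin N) := by
        simp only [Fintype.card_finset, Fintype.card_pi, Fintype.card_fin, Finset.prod_const,
          Finset.card_univ]
        exact (Nat.pow_le_pow_right two_pos (Nat.pow_le_pow_right hq0 hk)).trans hN
      obtain ⟨e⟩ := Function.Embedding.nonempty_of_card_le this
      exact ⟨Function.invFun e, fun _ => Function.invFun_surjective e.injective⟩
    · exact ⟨fun _ => ∅, fun h => absurd h hk⟩
  choose T hT using hT
  let Z : (k : ℕ) → List (Fin N) → Finset (Fin k → Fin q) := fun k l =>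
    l.getLast?.elim Finset.univ (T k)
  have hZ : ∀ l : List (Fin N), l.length < d →
      ∀ Z' : Finset (Fin (l.length + 1) → Fin q), ∃ i, Z (l.length + 1) (l ++ [i]) = Z' := by
    intro l hl Z'
    obtain ⟨i, hi⟩ := hT (l.length + 1) hl Z'
    exact ⟨i, by simp [Z, hi]⟩
  have hroot : (Z 0 []).card = sylvester 0 - 1 := by simp [Z, sylvester]
  refine ⟨fun v c => treeGuess Z γ v.1.length v.1
    (DescendantsWrong Z γ (d - v.1.length) v.1.length v.1)
    (fun x => if h : ∃ hx : x.length ≤ d, (ancTree d N).Adj v ⟨x, hx⟩ then c ⟨_, h.2⟩ else 0),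
    fun χ => ?_⟩
  by_contra! hwrong
  let χ' : List (Fin N) → Fin q := fun x => if hx : x.length ≤ d then χ ⟨x, hx⟩ else 0
  have hall : ∀ z, AllWrong Z γ (d + 1) 0 [] (recolorPrefixes 0 [] z χ') := by
    intro z
    have : recolorPrefixes 0 [] z χ' = χ' := by
      funext x
      simp [recolorPrefixes]
    rw [this]
    refine allWrong_of_forall_ne Z γ (k := 0) rfl (zero_add _) fun x hx => ?_
    have := hwrong ⟨x, hx⟩
    have hχx : χ' x = χ ⟨x, hx⟩ := dif_pos hx
    rw [hχx]
    convert this using 1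
    refine treeGuess_congr Z γ rfl fun w hw hne hcomp => ?_
    have hwd : w.length ≤ d := by omega
    have hadj : ∃ hw : w.length ≤ d, (ancTree d N).Adj ⟨x, hx⟩ ⟨w, hw⟩ :=
      ⟨hwd, fun h => hne (congrArg Subtype.val h).symm, hcomp.symm⟩
    rw [dif_pos hadj]
    exact dif_pos hwd
  obtain ⟨z, -, hz⟩ := exists_not_allWrong hγ rfl χ'
    (card_survivingColors_le hq hZ hγ (zero_add d) rfl hroot χ')
  exact hz (hall z)

end LowerBound

/-- Theorem 1 (He–Li): for every `d ≥ 1` and all sufficiently large `N`,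
`HG(G_d(N)) = s_d - 1`, where `s` is Sylvester's sequence. -/
theorem hatGuessing_ancTree (d : ℕ) (hd : 1 ≤ d) :
    ∃ N₀ : ℕ, ∀ N : ℕ, N₀ ≤ N →
      hatGuessingNumber (ancTree d N) = sylvester d - 1 := by
  refine ⟨2 ^ (sylvester d - 1) ^ d, fun N hN => IsGreatest.csSup_eq ⟨hatWinning_ancTree hN, ?_⟩⟩
  intro q hq
  exact Nat.le_sub_one_of_lt hq.lt_sylvester
end

section
/- Let d ≥ 1 and N ≥ 1 be integers, and let s_d be the d-th term of Sylvester's sequence. Then in the hat guessing game on G_d(N) with s_d colors, the players have no winning strategy; that is, for every assignment to each vertex v of a function g_v from s_d-colorings of its neighborhood to {1,…,s_d}, there exists an s_d-coloring χ of the vertices such that every vertex v satisfies g_v(χ restricted to N(v)) ≠ χ(v). Consequently HG(G_d(N)) < s_d. -/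
/-- Doubling up the guesses: avoiding `s` guesses for each of `s + 1` root colors costs
`s * (s + 1)` guesses at every other vertex. -/
def guessGrowth (s : ℕ) : ℕ := s * (s + 1)

lemma sylvester_eq_iterate_guessGrowth (d : ℕ) : sylvester d = guessGrowth^[d] 1 + 1 := by
  induction d with
  | zero => rfl
  | succ d ih =>
    rw [Function.iterate_succ_apply', sylvester, ih, guessGrowth]
    generalize guessGrowth^[d] 1 = x
    have h : (x + 1) ^ 2 = x * (x + 1) + (x + 1) := by ring
    omega

lemma le_iterate_guessGrowth (d s : ℕ) : s ≤ guessGrowth^[d] s := by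
  induction d generalizing s with
  | zero => rfl
  | succ d ih =>
    exact le_trans (Nat.le_mul_of_pos_right s s.succ_pos) (ih (guessGrowth s))

/-- The coloring of a tree assembled from a root color and colorings of the subtrees. -/
def assembleColoring {α β : Type*} (c : β) (f : α → List α → β) : List α → β
  | [] => c
  | i :: m => f i m

/-- If every vertex of a rooted tree names at most `s` colors, based only on the colors of its
proper ancestors and descendants, then with more than `guessGrowth^[d] s` colors there is a
coloring in which no vertex of depth at most `d` names its own color. -/
lemma exists_coloring_avoiding {α : Type*} {q : ℕ} (d s : ℕ) (hq : guessGrowth^[d] s < q)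
    (g : List α → (List α → Fin q) → Finset (Fin q))
    (hcard : ∀ l χ, (g l χ).card ≤ s)
    (hlocal : ∀ l χ χ', (∀ m, m ≠ l → (l <+: m ∨ m <+: l) → χ m = χ' m) → g l χ = g l χ') :
    ∃ χ : List α → Fin q, ∀ l, l.length ≤ d → χ l ∉ g l χ := by
  classical
  induction d generalizing s g with
  | zero =>
    let χ₀ : List α → Fin q := fun _ => ⟨0, by omega⟩
    obtain ⟨c, -, hc⟩ := Finset.exists_mem_notMem_of_card_lt_card
      (s := g [] χ₀) (t := Finset.univ)
      (by rw [Finset.card_univ, Fintype.card_fin]; exact (hcard _ _).trans_lt hq)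
    refine ⟨Function.update χ₀ [] c, fun l hl => ?_⟩
    obtain rfl : l = [] := List.length_eq_zero_iff.mp (by omega)
    rw [hlocal [] _ χ₀ fun m hm _ => Function.update_of_ne hm _ _, Function.update_self]
    exact hc
  | succ d ih =>
    have hsq : s + 1 ≤ (Finset.univ : Finset (Fin q)).card := by
      rw [Finset.card_univ, Fintype.card_fin]
      exact (le_iterate_guessGrowth (d + 1) s).trans_lt hq
    obtain ⟨A, -, hA⟩ := Finset.exists_subset_card_eq hsq
    have hsub : ∀ i : α, ∃ χ : List α → Fin q, ∀ l, l.length ≤ d →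
        χ l ∉ A.biUnion fun c => g (i :: l) (assembleColoring c fun _ => χ) := by
      intro i
      refine ih (guessGrowth s) hq
        (fun l χ => A.biUnion fun c => g (i :: l) (assembleColoring c fun _ => χ)) ?_ ?_
      · intro l χ
        refine (Finset.card_biUnion_le_card_mul _ _ s fun c _ => hcard _ _).trans_eq ?_
        rw [hA, guessGrowth, mul_comm]
      · intro l χ χ' h
        refine Finset.biUnion_congr rfl fun c _ => hlocal _ _ _ fun m hm hlm => ?_
        cases m with
        | nil => rfl
        | cons j m =>
          rw [List.cons_prefix_cons, List.cons_prefix_cons] at hlm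
          obtain rfl : i = j := hlm.elim (·.1) (·.1.symm)
          exact h m (fun e => hm (e ▸ rfl)) (hlm.imp (·.2) (·.2))
    choose f hf using hsub
    let χ₀ : List α → Fin q := assembleColoring ⟨0, by omega⟩ f
    obtain ⟨c, hcA, hc⟩ := Finset.exists_mem_notMem_of_card_lt_card
      (s := g [] χ₀) (t := A) (by have := hcard [] χ₀; omega)
    refine ⟨assembleColoring c f, fun l hl => ?_⟩
    cases l with
    | nil =>
      rw [hlocal [] _ χ₀ fun m hm _ => ?_]
      · exact hc
      · cases m with
        | nil => exact absurd rfl hm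
        | cons j m => rfl
    | cons i l =>
      intro hmem
      refine hf i l (by simpa using hl) (Finset.mem_biUnion.mpr ⟨c, hcA, ?_⟩)
      rw [hlocal (i :: l) _ (assembleColoring c f) fun m hm hlm => ?_]
      · exact hmem
      · cases m with
        | nil => rfl
        | cons j m =>
          rw [List.cons_prefix_cons, List.cons_prefix_cons] at hlm
          obtain rfl : i = j := hlm.elim (·.1) (·.1.symm)
          rfl

lemma not_hatWinning_ancTree {d N q : ℕ} (hq : sylvester d ≤ q) :
    ¬ HatWinning (ancTree d N) q := by
  rintro ⟨g, hg⟩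
  obtain ⟨χ, hχ⟩ := exists_coloring_avoiding (α := Fin N) (q := q) d 1
    (by rw [sylvester_eq_iterate_guessGrowth] at hq; exact hq)
    (fun l χ => if h : l.length ≤ d then {g ⟨l, h⟩ fun w => χ w.1.1} else ∅)
    (fun l χ => by split_ifs <;> simp)
    (fun l χ χ' h => by
      split_ifs with hl
      · congr 2
        funext w
        exact h _ (fun e => w.2.1 (Subtype.ext e.symm)) w.2.2
      · rfl)
  obtain ⟨v, hv⟩ := hg fun v => χ v.1
  refine hχ v.1 v.2 ?_
  rw [dif_pos v.2, Finset.mem_singleton]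
  exact hv.symm

/-- Upper bound in Theorem 1: with `s_d` colors the players have no winning
strategy on `G_d(N)`; consequently `HG(G_d(N)) < s_d`. -/
theorem hatGuessing_ancTree_upper (d N : ℕ) (hd : 1 ≤ d) (hN : 1 ≤ N) :
    ¬ HatWinning (ancTree d N) (sylvester d) ∧
      hatGuessingNumber (ancTree d N) < sylvester d := by
  refine ⟨not_hatWinning_ancTree le_rfl, ?_⟩
  have hlt : ∀ q ∈ {q : ℕ | HatWinning (ancTree d N) q}, q < sylvester d := fun q hw =>
    lt_of_not_ge fun hq => not_hatWinning_ancTree hq hw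
  rcases Set.eq_empty_or_nonempty {q : ℕ | HatWinning (ancTree d N) q} with he | hne
  · rw [hatGuessingNumber, he, csSup_empty, sylvester_eq_iterate_guessGrowth]
    exact Nat.succ_pos _
  · exact hlt _ (Nat.sSup_mem hne ⟨_, fun q hw => (hlt q hw).le⟩)
end

section
/- Let d ≥ 2 and D ≥ 1 be integers, and let G be a finite simple graph admitting a d-degenerate vertex ordering of depth D. Then HG(G) < 2^{d^{D+1}}; equivalently, in the hat guessing game on G with 2^{d^{D+1}} colors, the players have no winning strategy. -/
/-- If every vertex `v` carries a list of `h v ≤ q` colors, and `h v` exceeds the product of the list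
sizes of its earlier neighbors, then no strategy wins: choosing colors from right to left, each
vertex has a color in its list which it never guesses, whatever colors its earlier neighbors
receive from their lists. -/
theorem not_hatWinning_of_prod_lt {n q : ℕ} (G : SimpleGraph (Fin n)) [DecidableRel G.Adj]
    (h : Fin n → ℕ) (hq : ∀ v, h v ≤ q)
    (hprod : ∀ v, ∏ w with w < v ∧ G.Adj w v, h w < h v) : ¬ HatWinning G q := by
  rintro ⟨g, hg⟩
  let L : Fin n → Finset (Fin q) := fun v => {c | (c : ℕ) < h v}
  have hL : ∀ v, (L v).card = h v := fun v => by
    simp [L, Fin.card_filter_val_lt, hq v]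
  have h_pos : ∀ v, 0 < h v := fun v => (Nat.zero_le _).trans_lt (hprod v)
  have key : ∀ k ≤ n, ∃ χ : Fin n → Fin q, ∀ v : Fin n, k ≤ v → χ v ∈ L v ∧
      ∀ ψ : Fin n → Fin q, (∀ w, v < w → ψ w = χ w) → (∀ w, w < v → ψ w ∈ L w) →
        g v (fun w => ψ w.1) ≠ χ v := by
    intro k hk
    induction hk using Nat.decreasingInduction with
    | self =>
      exact ⟨fun v => ⟨0, (h_pos v).trans_le (hq v)⟩, fun v hv => absurd v.2 (not_lt.2 hv)⟩
    | of_succ k hk ih =>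
      obtain ⟨χ, hχ⟩ := ih
      let v : Fin n := ⟨k, hk⟩
      let S : {w // G.Adj v w} → Finset (Fin q) := fun w => if w.1 < v then L w else {χ w}
      have hcard : ((Fintype.piFinset S).image (g v)).card < (L v).card := by
        refine Finset.card_image_le.trans_lt ?_
        rw [Fintype.card_piFinset, hL]
        refine lt_of_eq_of_lt ?_ (hprod v)
        have hS : ∀ w, (S w).card = if w.1 < v then h w else 1 := fun w => by
          by_cases hw : w.1 < v <;> simp [S, hw, hL]
        simp_rw [hS]
        rw [← Finset.prod_subtype ({w | G.Adj v w} : Finset (Fin n)) (by simp)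
          (fun w => if w < v then h w else 1), ← Finset.prod_filter, Finset.filter_filter]
        simp only [and_comm, G.adj_comm v]
      obtain ⟨c, hcL, hc⟩ := Finset.exists_mem_notMem_of_card_lt_card hcard
      refine ⟨Function.update χ v c, fun u hu => ?_⟩
      rcases eq_or_lt_of_le hu with huk | huk
      · obtain rfl : u = v := Fin.ext huk.symm
        refine ⟨by simpa using hcL, fun ψ hψ hψL heq => hc ?_⟩
        rw [Function.update_self] at heq
        refine Finset.mem_image.2 ⟨_, Fintype.mem_piFinset.2 fun w => ?_, heq⟩
        by_cases hw : w.1 < v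
        · simpa [S, hw] using hψL w hw
        · have hlt : v < w.1 := lt_of_le_of_ne (not_lt.1 hw) w.2.ne
          have := hψ w hlt
          rw [Function.update_of_ne hlt.ne'] at this
          simp [S, hw, this]
      · have huv : v < u := huk
        rw [Function.update_of_ne huv.ne']
        refine ⟨(hχ u huk).1, fun ψ hψ hψL => (hχ u huk).2 ψ (fun w hw => ?_) hψL⟩
        rw [hψ w hw, Function.update_of_ne (huv.trans hw).ne']
  obtain ⟨χ, hχ⟩ := key 0 n.zero_le
  obtain ⟨v, hv⟩ := hg χ
  exact (hχ v (Nat.zero_le _)).2 χ (fun _ _ => rfl) (fun w _ => (hχ w (Nat.zero_le _)).1) hv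

theorem IsLTRPath.snoc {n k : ℕ} {G : SimpleGraph (Fin n)} {p : Fin (k + 1) → Fin n}
    (hp : IsLTRPath G k p) {w : Fin n} (hlt : p (Fin.last k) < w) (hadj : G.Adj (p (Fin.last k)) w) :
    IsLTRPath G (k + 1) (Fin.snoc p w : Fin (k + 2) → Fin n) := by
  refine ⟨Fin.strictMono_iff_lt_succ.2 fun i => ?_, fun i => ?_⟩
  all_goals
    induction i using Fin.lastCases with
    | last => simpa only [Fin.succ_last, Nat.succ_eq_add_one, Fin.snoc_last, Fin.snoc_castSucc]
    | cast i =>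
      rw [Fin.snoc_castSucc, Fin.succ_castSucc, Fin.snoc_castSucc]
      first
      | exact hp.1 i.castSucc_lt_succ
      | exact hp.2 i

/-- The depth strictly increases along left-to-right edges. -/
theorem ltrDepth_lt_of_adj {n D : ℕ} {G : SimpleGraph (Fin n)}
    (hdepth : ∀ (k : ℕ) (p : Fin (k + 1) → Fin n), IsLTRPath G k p → k ≤ D)
    {v w : Fin n} (hvw : v < w) (hadj : G.Adj v w) : ltrDepth G v < ltrDepth G w := by
  have hne : {k : ℕ | ∃ p : Fin (k + 1) → Fin n, IsLTRPath G k p ∧ p (Fin.last k) = v}.Nonempty :=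
    ⟨0, fun _ => v, ⟨Subsingleton.strictMono (α := Fin 1) _, fun i => i.elim0⟩, rfl⟩
  obtain ⟨p, hp, hpv⟩ := Nat.sSup_mem hne ⟨D, fun k ⟨p, hp, _⟩ => hdepth k p hp⟩
  exact Nat.lt_of_succ_le (le_csSup ⟨D, fun k ⟨p, hp, _⟩ => hdepth k p hp⟩
    ⟨_, hp.snoc (hpv.trans_lt hvw) (hpv.symm ▸ hadj), Fin.snoc_last (α := fun _ => Fin n) _ _⟩)

theorem ltrDepth_le {n D : ℕ} {G : SimpleGraph (Fin n)}
    (hdepth : ∀ (k : ℕ) (p : Fin (k + 1) → Fin n), IsLTRPath G k p → k ≤ D) (v : Fin n) :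
    ltrDepth G v ≤ D :=
  csSup_le' fun k ⟨p, hp, _⟩ => hdepth k p hp

theorem sub_one_pow_lt_pow_sub_one {x d : ℕ} (hx : 2 ≤ x) (hd : 2 ≤ d) :
    (x - 1) ^ d < x ^ d - 1 := by
  obtain ⟨y, rfl⟩ := Nat.exists_eq_add_of_le' (Nat.one_le_of_lt hx)
  obtain ⟨e, rfl⟩ := Nat.exists_eq_add_of_le' (Nat.one_le_of_lt hd)
  have hle : y ^ e ≤ (y + 1) ^ e := Nat.pow_le_pow_left y.le_succ e
  have htwo : 2 ≤ (y + 1) ^ e := hx.trans (Nat.le_self_pow (by omega) _)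
  rw [Nat.add_sub_cancel, pow_succ, pow_succ, mul_add_one]
  have := Nat.mul_le_mul_right y hle
  omega

/-- Theorem 2 (He–Li): if `d ≥ 2`, `D ≥ 1` and `G` has a `d`-degenerate vertex
ordering of depth `D` (every vertex has at most `d` earlier neighbors, and the
longest left-to-right path has exactly `D` edges), then `HG(G) < 2^(d^(D+1))`;
equivalently the players have no winning strategy with `2^(d^(D+1))` colors. -/
theorem hatGuessing_degenerate_upper (d D n : ℕ) (hd : 2 ≤ d) (hD : 1 ≤ D)
    (G : SimpleGraph (Fin n))
    (hdeg : ∀ i : Fin n, {j : Fin n | j < i ∧ G.Adj j i}.ncard ≤ d)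
    (hdepth : ∀ (k : ℕ) (p : Fin (k + 1) → Fin n), IsLTRPath G k p → k ≤ D)
    (hex : ∃ p : Fin (D + 1) → Fin n, IsLTRPath G D p) :
    ¬ HatWinning G (2 ^ d ^ (D + 1)) ∧ hatGuessingNumber G < 2 ^ d ^ (D + 1) := by
  classical
  have not_winning : ∀ q, 2 ^ d ^ (D + 1) ≤ q → ¬ HatWinning G q := by
    intro q hq
    refine not_hatWinning_of_prod_lt G (fun v => 2 ^ d ^ (ltrDepth G v + 1) - 1)
      (fun v => ?_) fun v => ?_
    · refine (Nat.sub_le _ _).trans (le_trans ?_ hq)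
      have := ltrDepth_le hdepth v
      gcongr <;> omega
    · have hone : 1 ≤ 2 ^ d ^ ltrDepth G v - 1 :=
        Nat.le_sub_of_add_le (Nat.le_self_pow (by positivity) 2)
      have hcard : (Finset.univ.filter fun w => w < v ∧ G.Adj w v).card ≤ d := by
        simpa [← Set.ncard_coe_finset] using hdeg v
      calc ∏ w with w < v ∧ G.Adj w v, (2 ^ d ^ (ltrDepth G w + 1) - 1)
          ≤ (2 ^ d ^ ltrDepth G v - 1) ^ (Finset.univ.filter fun w => w < v ∧ G.Adj w v).card := by
            refine Finset.prod_le_pow_card _ _ _ fun w hw => ?_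
            obtain ⟨hwv, hadj⟩ := (Finset.mem_filter.1 hw).2
            have := ltrDepth_lt_of_adj hdepth hwv hadj
            gcongr <;> omega
        _ ≤ (2 ^ d ^ ltrDepth G v - 1) ^ d := Nat.pow_le_pow_right hone hcard
        _ < (2 ^ d ^ ltrDepth G v) ^ d - 1 :=
            sub_one_pow_lt_pow_sub_one (Nat.le_self_pow (by positivity) 2) hd
        _ = 2 ^ d ^ (ltrDepth G v + 1) - 1 := by rw [← pow_mul, ← pow_succ]
  refine ⟨not_winning _ le_rfl, ?_⟩
  rcases {q | HatWinning G q}.eq_empty_or_nonempty with hempty | hne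
  · simp [hatGuessingNumber, hempty]
  · by_contra hlt
    exact not_winning _ (not_lt.1 hlt) (Nat.sSup_mem hne
      ⟨_, fun q hq => le_of_not_ge fun hle => not_winning q hle hq⟩)
end

section
/- Let G be a finite simple graph with vertices ordered v_1,…,v_n, and for each i let A(v_i) = N(v_i) ∩ {v_1,…,v_{i−1}} be the set of neighbors of v_i preceding it. Define t_1,…,t_n recursively by t_i = 1 + ∏_{v_j ∈ A(v_i)} t_j (where the empty product equals 1). Then in the hat guessing game on G with q = max{t_1,…,t_n} colors, the players have no winning strategy; that is, for every assignment to each vertex v of a function g_v from q-colorings of its neighborhood to {1,…,q}, there exists a q-coloring χ of the vertices such that every vertex v satisfies g_v(χ restricted to N(v)) ≠ χ(v). Consequently HG(G) < max{t_1,…,t_n}. -/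
/-- If each vertex has a palette strictly larger than the number of ways to color its earlier
neighbors from their palettes, then every guessing strategy is defeated by a coloring from the
palettes. -/
theorem exists_coloring_forall_guess_ne {n q : ℕ} (G : SimpleGraph (Fin n)) [DecidableRel G.Adj]
    (S : Fin n → Finset (Fin q))
    (hS : ∀ i, ∏ j ∈ Finset.univ.filter (fun j => j < i ∧ G.Adj j i), (S j).card < (S i).card)
    (g : (v : Fin n) → ({w : Fin n // G.Adj v w} → Fin q) → Fin q) :
    ∃ χ : Fin n → Fin q, ∀ v, g v (fun w => χ w.1) ≠ χ v := by
  -- Colors are fixed from the last vertex down, against all palette colorings of earlier vertices.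
  suffices h : ∀ k ≤ n, ∃ χ : Fin n → Fin q, (∀ i, χ i ∈ S i) ∧
      ∀ i : Fin n, k ≤ i.val → ∀ ψ : Fin n → Fin q, (∀ j, ψ j ∈ S j) →
        (∀ j, i < j → ψ j = χ j) → g i (fun w => ψ w.1) ≠ χ i by
    obtain ⟨χ, hχ, hg⟩ := h 0 (Nat.zero_le n)
    exact ⟨χ, fun v => hg v (Nat.zero_le _) χ hχ fun _ _ => rfl⟩
  intro k hk
  induction hk using Nat.decreasingInduction with
  | self =>
    have hne : ∀ i, ∃ c, c ∈ S i := fun i => Finset.card_pos.mp (Nat.zero_lt_of_lt (hS i))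
    choose χ hχ using hne
    exact ⟨χ, hχ, fun i hi => absurd i.isLt (Nat.not_lt.mpr hi)⟩
  | of_succ k hk ih =>
    obtain ⟨χ, hχ, hg⟩ := ih
    let v : Fin n := ⟨k, hk⟩
    let F : Fin n → Finset (Fin q) := fun j => if j < v ∧ G.Adj j v then S j else {χ j}
    let guesses : Finset (Fin q) :=
      (Fintype.piFinset F).image fun ψ => g v (fun w => ψ w.1)
    have hcard : guesses.card < (S v).card := by
      refine lt_of_le_of_lt (Finset.card_image_le.trans_eq ?_) (hS v)
      rw [Fintype.card_piFinset, Finset.prod_filter]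
      refine Finset.prod_congr rfl fun j _ => ?_
      by_cases hj : j < v ∧ G.Adj j v <;> simp [F, hj]
    obtain ⟨c, hcS, hc⟩ := Finset.exists_mem_notMem_of_card_lt_card hcard
    refine ⟨Function.update χ v c, fun i => ?_, fun i hi ψ hψS hψ => ?_⟩
    · by_cases h : i = v
      · subst h; simpa using hcS
      · simpa [h] using hχ i
    · by_cases h : i = v
      · subst h
        rw [Function.update_self]
        rintro rfl
        refine hc (Finset.mem_image.mpr
          ⟨fun j => if j < v ∧ G.Adj j v then ψ j else χ j, ?_, ?_⟩)
        · rw [Fintype.mem_piFinset]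
          intro j
          by_cases hj : j < v ∧ G.Adj j v
          · simpa only [F, if_pos hj] using hψS j
          · simp only [F, if_neg hj, Finset.mem_singleton]
        · refine congrArg (g v) (funext fun w => ?_)
          rcases lt_or_gt_of_ne w.2.ne' with hw | hw
          · exact if_pos ⟨hw, w.2.symm⟩
          · simpa [hw.not_gt, hw.ne'] using (hψ w.1 hw).symm
      · have hki : k < i.val := lt_of_le_of_ne hi fun e => h (Fin.ext e.symm)
        rw [Function.update_of_ne h]
        refine hg i hki ψ hψS fun j hj => ?_
        have hjv : j ≠ v := (lt_trans (show v < i from hki) hj).ne'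
        rw [hψ j hj, Function.update_of_ne hjv]

/-- Lemma 4 (He–Li): if `t_i = 1 + ∏_{j ∈ A(v_i)} t_j` where `A(v_i)` is the set of
earlier neighbors of `v_i`, then the players have no winning strategy with
`q = max t_i` colors; consequently `HG(G) < max t_i`. -/
theorem hatGuessing_lt_max_t (n : ℕ) (hn : 1 ≤ n) (G : SimpleGraph (Fin n))
    [DecidableRel G.Adj] (t : Fin n → ℕ)
    (ht : ∀ i : Fin n,
      t i = 1 + ∏ j ∈ Finset.univ.filter (fun j => j < i ∧ G.Adj j i), t j)
    (q : ℕ) (hq : q = Finset.univ.sup t) :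
    ¬ HatWinning G q ∧ hatGuessingNumber G < q := by
  have key : ∀ r, q ≤ r → ¬ HatWinning G r := by
    rintro r hr ⟨g, hg⟩
    have hcard : ∀ i, (Finset.univ.filter fun c : Fin r => c.val < t i).card = t i := fun i => by
      have hi : t i ≤ r := (Finset.le_sup (Finset.mem_univ i)).trans (hq ▸ hr)
      rw [Fin.card_filter_val_lt, min_eq_right hi]
    obtain ⟨χ, hχ⟩ := exists_coloring_forall_guess_ne G
      (fun i => Finset.univ.filter fun c : Fin r => c.val < t i)
      (fun i => by simp only [hcard]; have := ht i; omega) g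
    obtain ⟨v, hv⟩ := hg χ
    exact hχ v hv
  have hpos : 0 < q := by
    have h₀ : t ⟨0, hn⟩ ≤ q := hq ▸ Finset.le_sup (Finset.mem_univ _)
    have := ht ⟨0, hn⟩
    omega
  refine ⟨key q le_rfl, lt_of_le_of_lt (csSup_le' fun r hr => ?_) (Nat.sub_one_lt hpos.ne')⟩
  by_contra h
  exact key r (by omega) hr
end

section
/- Let d ≥ 2 be an integer. For all sufficiently large n (in terms of d), the hat guessing number of the book graph B_{d,n} satisfies (d+1)! ≤ HG(B_{d,n}) ≤ d^{d−2}(d^2 + d − 1) + 1. -/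
open Finset

/-- A finite set `S` of points of `ι → α` is coverable in the directions `I` if each point can be
assigned a direction in `I` so that any two points assigned the same direction `i` and lying on
a common line parallel to the `i`-th axis coincide. -/
def CoverableIn {ι α : Type*} (I : Finset ι) (S : Finset (ι → α)) : Prop :=
  ∃ f : (ι → α) → ι, ∀ x ∈ S, f x ∈ I ∧
    ∀ y ∈ S, f x = f y → (∀ j, j ≠ f x → x j = y j) → x = y

/-- If a slice is coverable using the directions within the slice and its complement is coverable,
then so is the whole set. -/
theorem CoverableIn.of_slice {ι α : Type*} [DecidableEq ι] [DecidableEq α] {I : Finset ι}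
    {S : Finset (ι → α)} (i : ι) (c : α)
    (h₁ : CoverableIn (I.erase i) (S.filter fun x => x i = c))
    (h₂ : CoverableIn I (S.filter fun x => x i ≠ c)) : CoverableIn I S := by
  obtain ⟨g, hg⟩ := h₁
  obtain ⟨h, hh⟩ := h₂
  refine ⟨fun x => if x i = c then g x else h x, fun x hx => ?_⟩
  by_cases hxc : x i = c
  · obtain ⟨hgI, hgx⟩ := hg x (mem_filter.2 ⟨hx, hxc⟩)
    simp only [hxc, if_true]
    refine ⟨mem_of_mem_erase hgI, fun y hy hf hl => ?_⟩
    have hyc : y i = c := by rw [← hl i (ne_of_mem_erase hgI).symm, hxc]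
    rw [if_pos hyc] at hf
    exact hgx y (mem_filter.2 ⟨hy, hyc⟩) hf hl
  · obtain ⟨hhI, hhx⟩ := hh x (mem_filter.2 ⟨hx, hxc⟩)
    simp only [hxc, if_false]
    refine ⟨hhI, fun y hy hf hl => ?_⟩
    by_cases hyc : y i = c
    · rw [if_pos hyc] at hf
      have hgI := (hg y (mem_filter.2 ⟨hy, hyc⟩)).1
      rw [← hf] at hgI
      exact absurd ((hl i (ne_of_mem_erase hgI).symm).trans hyc) hxc
    · rw [if_neg hyc] at hf
      exact hhx y (mem_filter.2 ⟨hy, hyc⟩) hf hl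

/-- A set of at most `m + 1` values can be labelled injectively by `Fin (m + 1)`. -/
theorem exists_injOn_fin_of_card_le {α : Type*} {m : ℕ} (A : Finset α) (hA : #A ≤ m + 1) :
    ∃ e : α → Fin (m + 1), Set.InjOn e A := by
  obtain ⟨φ⟩ : Nonempty (A ↪ Fin (m + 1)) :=
    Function.Embedding.nonempty_of_card_le (by simpa using hA)
  classical
  refine ⟨fun a => if h : a ∈ A then φ ⟨a, h⟩ else 0, fun a ha b hb hab => ?_⟩
  rw [mem_coe] at ha hb
  simpa [ha, hb] using hab

/-- If the points of `S` take at most `#I` values in each coordinate of `I`, then `S` is coverable: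
assign directions by the sum of the coordinates modulo `#I`. -/
theorem coverableIn_of_card_image_le {ι α : Type*} [DecidableEq ι] [DecidableEq α]
    {I : Finset ι} {S : Finset (ι → α)} {m : ℕ} (hI : #I = m + 1)
    (hS : ∀ i ∈ I, #(S.image fun x => x i) ≤ m + 1) : CoverableIn I S := by
  choose! e he using fun i hi => exists_injOn_fin_of_card_le _ (hS i hi)
  let σ : I ≃ Fin (m + 1) := I.equivFinOfCardEq hI
  refine ⟨fun x => σ.symm (∑ j ∈ I, e j (x j)), fun x hx => ⟨(σ.symm _).2, fun y hy hf hl => ?_⟩⟩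
  have hsum : ∑ j ∈ I, e j (x j) = ∑ j ∈ I, e j (y j) := σ.symm.injective (Subtype.ext hf)
  change ∀ j, j ≠ (σ.symm (∑ j ∈ I, e j (x j)) : ι) → x j = y j at hl
  generalize σ.symm (∑ j ∈ I, e j (x j)) = i at hl
  rw [← add_sum_erase I _ i.2, ← add_sum_erase I (fun j => e j (y j)) i.2,
    sum_congr rfl fun j hj => by rw [hl j (ne_of_mem_erase hj)]] at hsum
  have hxy : x i = y i := he i i.2 (mem_coe.2 (mem_image_of_mem (fun z => z i) hx))
    (mem_coe.2 (mem_image_of_mem (fun z => z i) hy)) (add_right_cancel hsum)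
  funext j
  by_cases hj : j = i
  · rw [hj, hxy]
  · exact hl j hj

/-- Every set of fewer than `(#I + 1)!` points is coverable in the directions `I`. -/
theorem coverableIn_of_card_lt_factorial {ι α : Type*} [Nonempty ι] (n : ℕ) (I : Finset ι)
    (hI : #I = n) (S : Finset (ι → α)) (hS : #S < (n + 1).factorial) : CoverableIn I S := by
  classical
  induction n generalizing I S with
  | zero =>
    have : S = ∅ := by simpa using hS
    subst this
    exact ⟨fun _ => Classical.arbitrary ι, by simp⟩
  | succ m ih =>
    induction S using Finset.strongInduction with
    | H S ihS =>
      by_cases hsmall : ∃ i ∈ I, ∃ x ∈ S, #(S.filter fun y => y i = x i) < (m + 1).factorial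
      · obtain ⟨i, hi, x, hx, hlt⟩ := hsmall
        refine CoverableIn.of_slice i (x i) (ih _ (by rw [card_erase_of_mem hi, hI]; rfl) _ hlt) ?_
        have hss : (S.filter fun y => y i ≠ x i) ⊂ S :=
          filter_ssubset.2 ⟨x, hx, by simp⟩
        exact ihS _ hss ((card_lt_card hss).trans hS)
      · push Not at hsmall
        refine coverableIn_of_card_image_le hI fun i hi => ?_
        have hle : #(S.image fun x => x i) * (m + 1).factorial ≤ #S := by
          rw [mul_comm]
          refine mul_card_image_le_card_of_maps_to (fun x hx => mem_image_of_mem _ hx) _ ?_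
          rintro c hc
          obtain ⟨x, hx, rfl⟩ := mem_image.1 hc
          exact hsmall i hi x hx
        rw [Nat.factorial_succ] at hS
        exact Nat.lt_succ_iff.1 (lt_of_mul_lt_mul_right (hle.trans_lt hS) (Nat.zero_le _))

/-- If every set of fewer than `q` spine colorings is coverable, then the players win on a book
with sufficiently many pages. -/
theorem hatWinning_bookGraph_of_coverableIn {d n q : ℕ} (hq : 0 < q)
    (hcov : ∀ S : Finset (Fin d → Fin q), #S < q → CoverableIn univ S)
    (hn : Fintype.card ((Fin d → Fin q) → Fin q) ≤ n) : HatWinning (bookGraph d n) q := by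
  classical
  have : NeZero q := ⟨hq.ne'⟩
  obtain ⟨ψ⟩ : Nonempty (((Fin d → Fin q) → Fin q) ↪ Fin n) :=
    Function.Embedding.nonempty_of_card_le (by simpa using hn)
  let p : Fin n → (Fin d → Fin q) → Fin q := Function.invFun ψ
  have hp : Function.Surjective p := Function.invFun_surjective ψ.injective
  let S : (Fin n → Fin q) → Finset (Fin d → Fin q) := fun c =>
    univ.filter fun x => ∀ k, p k x ≠ c k
  have hS : ∀ c, #(S c) < q := by
    intro c
    by_contra! hle
    obtain ⟨φ⟩ : Nonempty (Fin q ↪ S c) :=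
      Function.Embedding.nonempty_of_card_le (by simpa using hle)
    obtain ⟨k, hk⟩ := hp (Function.invFun fun a => (φ a : Fin d → Fin q))
    refine (mem_filter.1 (φ (c k)).2).2 k ?_
    rw [hk]
    exact Function.leftInverse_invFun (Subtype.val_injective.comp φ.injective) (c k)
  choose f hf using fun c => hcov (S c) (hS c)
  have hsp : ∀ (i : Fin d) (k : Fin n), (bookGraph d n).Adj (Sum.inl i) (Sum.inr k) :=
    fun i k => ⟨by simp, by simp⟩
  have hss : ∀ i j : Fin d, j ≠ i → (bookGraph d n).Adj (Sum.inl i) (Sum.inl j) :=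
    fun i j h => ⟨by simpa using h.symm, by simp⟩
  let P : (i : Fin d) → (c : Fin n → Fin q) → ((j : Fin d) → j ≠ i → Fin q) →
      (Fin d → Fin q) → Prop :=
    fun i c u x => x ∈ S c ∧ f c x = i ∧ ∀ j (h : j ≠ i), x j = u j h
  let guess : (i : Fin d) → (c : Fin n → Fin q) → ((j : Fin d) → j ≠ i → Fin q) → Fin q :=
    fun i c u => if h : ∃ x, P i c u x then h.choose i else 0
  refine ⟨fun v => match v with
    | Sum.inl i => fun χ => guess i (fun k => χ ⟨Sum.inr k, hsp i k⟩)
        (fun j h => χ ⟨Sum.inl j, hss i j h⟩)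
    | Sum.inr k => fun χ => p k fun i => χ ⟨Sum.inl i, (hsp i k).symm⟩, fun χ => ?_⟩
  by_cases hpage : ∃ k, p k (fun i => χ (Sum.inl i)) = χ (Sum.inr k)
  · obtain ⟨k, hk⟩ := hpage
    exact ⟨Sum.inr k, hk⟩
  · push Not at hpage
    let c : Fin n → Fin q := fun k => χ (Sum.inr k)
    let x : Fin d → Fin q := fun i => χ (Sum.inl i)
    have hx : x ∈ S c := mem_filter.2 ⟨mem_univ _, hpage⟩
    have hex : ∃ y, P (f c x) c (fun j _ => x j) y := ⟨x, hx, rfl, fun _ _ => rfl⟩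
    refine ⟨Sum.inl (f c x), ?_⟩
    change guess (f c x) c (fun j _ => x j) = x (f c x)
    obtain ⟨hy, hfy, hly⟩ := hex.choose_spec
    have hxy := (hf c x hx).2 _ hy hfy.symm fun j hj => (hly j hj).symm
    simp only [guess, dif_pos hex]
    rw [← hxy]

/-- A winning strategy on a book yields, for every set `T` of fewer than `q` spine colorings,
guessing functions for the spine alone that succeed on all of `T`. -/
theorem HatWinning.exists_spine_guess {d n q : ℕ} (h : HatWinning (bookGraph d n) q)
    (T : Finset (Fin d → Fin q)) (hT : #T < q) :
    ∃ G : Fin d → (Fin d → Fin q) → Fin q,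
      (∀ i x y, (∀ j, j ≠ i → x j = y j) → G i x = G i y) ∧ ∀ x ∈ T, ∃ i, G i x = x i := by
  classical
  obtain ⟨g, hg⟩ := h
  let p : Fin n → (Fin d → Fin q) → Fin q := fun k x =>
    g (Sum.inr k) fun w => Sum.elim x (fun _ => ⟨0, by omega⟩) w.1
  have hc : ∀ k, ∃ a, a ∉ T.image (p k) := fun k => by
    by_contra! hall
    have h₁ := card_le_card (fun a _ => hall a : (univ : Finset (Fin q)) ⊆ T.image (p k))
    rw [card_univ, Fintype.card_fin] at h₁
    exact absurd (h₁.trans card_image_le) (by omega)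
  choose c hc using hc
  refine ⟨fun i x => g (Sum.inl i) fun w => Sum.elim x c w.1, fun i x y hxy => ?_, fun x hx => ?_⟩
  · refine congrArg _ (funext ?_)
    rintro ⟨j | k, hw⟩
    · exact hxy j fun hj => hw.1 (by rw [hj])
    · rfl
  · obtain ⟨i | k, hv⟩ := hg (Sum.elim x c)
    · exact ⟨i, hv⟩
    · refine absurd (mem_image.2 ⟨x, hx, ?_⟩) (hc k)
      refine Eq.trans (congrArg (g (Sum.inr k)) (funext ?_)) hv
      rintro ⟨j | k', hw⟩
      · rfl
      · simpa [bookGraph] using hw.2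

/-- If the spine alone succeeds on a subset `T` of the box `∏ B i`, then `T` has at most as many
points as there are axis-parallel lines meeting the box. -/
theorem card_le_sum_prod_of_spine_guess {d q : ℕ} [NeZero q] (B : Fin d → Finset (Fin q))
    (T : Finset (Fin d → Fin q)) (hT : T ⊆ Fintype.piFinset B)
    (G : Fin d → (Fin d → Fin q) → Fin q)
    (hG : ∀ i x y, (∀ j, j ≠ i → x j = y j) → G i x = G i y)
    (hw : ∀ x ∈ T, ∃ i, G i x = x i) :
    #T ≤ ∑ i, ∏ j, if j = i then 1 else #(B j) := by
  classical
  by_cases hne : T = ∅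
  · simp [hne]
  have : Nonempty (Fin d) := by
    obtain ⟨x, hx⟩ := nonempty_iff_ne_empty.2 hne
    exact ⟨(hw x hx).choose⟩
  choose! s hs using hw
  have hcard : ∀ i, #(Fintype.piFinset fun j => if j = i then {0} else B j) =
      ∏ j, if j = i then 1 else #(B j) := fun i => by
    rw [Fintype.card_piFinset]
    exact prod_congr rfl fun j _ => by split_ifs <;> simp
  simp_rw [← hcard]
  rw [← card_sigma]
  refine card_le_card_of_injOn (fun x => ⟨s x, Function.update x (s x) 0⟩) ?_ ?_
  · intro x hx
    simp only [coe_sigma, Set.mem_sigma_iff, mem_coe, mem_univ, true_and, Fintype.mem_piFinset]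
    intro j
    by_cases hj : j = s x
    · simp [hj]
    · simpa [hj] using Fintype.mem_piFinset.1 (hT hx) j
  · intro x hx y hy hxy
    simp only [Sigma.mk.injEq, heq_eq_eq] at hxy
    obtain ⟨hsxy, hu⟩ := hxy
    rw [← hsxy] at hu
    have hl : ∀ j, j ≠ s x → x j = y j := fun j hj => by
      simpa [hj] using congrFun hu j
    funext j
    by_cases hj : j = s x
    · rw [hj, ← hs x hx, hG _ x y hl, hsxy, hs y hy]
    · exact hl j hj

/-- The players cannot win on a book with more than `d^(d-2) * (d^2+d-1) + 1` colors. -/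
theorem HatWinning.le_of_bookGraph {d n q : ℕ} (hd : 2 ≤ d) (h : HatWinning (bookGraph d n) q) :
    q ≤ d ^ (d - 2) * (d ^ 2 + d - 1) + 1 := by
  by_contra! hlt
  obtain ⟨k, rfl⟩ := Nat.exists_eq_add_of_le' hd
  set L := (k + 2) ^ (k + 2 - 2) * ((k + 2) ^ 2 + (k + 2) - 1) with hL
  have hL' : L = (k + 2) ^ k * ((k + 2) ^ 2 + k + 1) := hL
  have hpow : 1 ≤ (k + 2) ^ k := Nat.one_le_pow _ _ (by omega)
  have hkq : k + 3 ≤ q := by nlinarith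
  have : NeZero q := ⟨by omega⟩
  let B : Fin (k + 2) → Finset (Fin q) :=
    Fin.cons (univ.filter fun a => a.val < k + 3) fun _ => univ.filter fun a => a.val < k + 2
  have hB₀ : #(B 0) = k + 3 := by simp [B, Fin.card_filter_val_lt, hkq]
  have hB : ∀ j : Fin (k + 1), #(B j.succ) = k + 2 := fun j => by
    simp [B, Fin.card_filter_val_lt]; omega
  have hbox : L + 1 ≤ #(Fintype.piFinset B) := by
    rw [Fintype.card_piFinset, Fin.prod_univ_succ]
    simp only [hB₀, hB, prod_const, card_univ, Fintype.card_fin]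
    rw [hL', pow_succ _ k]
    nlinarith
  obtain ⟨T, hTB, hT⟩ := exists_subset_card_eq hbox
  obtain ⟨G, hG, hw⟩ := h.exists_spine_guess T (by omega)
  have hle := card_le_sum_prod_of_spine_guess B T hTB G hG hw
  have hlines : ∑ i, ∏ j, (if j = i then 1 else #(B j)) = L := by
    have hz : ∀ i : Fin (k + 1), ∏ j : Fin (k + 1), (if j = i then 1 else k + 2) = (k + 2) ^ k :=
      fun i => by
        rw [← mul_prod_erase univ _ (mem_univ i), if_pos rfl, one_mul,
          prod_congr rfl fun j hj => if_neg (ne_of_mem_erase hj)]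
        simp
    rw [Fin.sum_univ_succ]
    simp only [Fin.prod_univ_succ (n := k + 1), hB₀, hB, Fin.succ_ne_zero, Fin.succ_inj,
      (Fin.succ_ne_zero _).symm, if_true, if_false, hz]
    simp only [prod_const, sum_const, card_univ, Fintype.card_fin, smul_eq_mul]
    rw [hL']
    ring
  omega

/-- Theorem 3 (He–Li): for `d ≥ 2` and all sufficiently large `n`,
`(d+1)! ≤ HG(B_{d,n}) ≤ d^(d-2)(d^2+d-1) + 1`. -/
theorem hatGuessing_book (d : ℕ) (hd : 2 ≤ d) :
    ∃ n₀ : ℕ, ∀ n : ℕ, n₀ ≤ n →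
      (d + 1).factorial ≤ hatGuessingNumber (bookGraph d n) ∧
      hatGuessingNumber (bookGraph d n) ≤ d ^ (d - 2) * (d ^ 2 + d - 1) + 1 := by
  refine ⟨Fintype.card ((Fin d → Fin (d + 1).factorial) → Fin (d + 1).factorial), fun n hn => ?_⟩
  refine ⟨le_csSup ⟨_, fun q hq => HatWinning.le_of_bookGraph hd hq⟩ ?_,
    csSup_le' fun q hq => HatWinning.le_of_bookGraph hd hq⟩
  have : Nonempty (Fin d) := ⟨⟨0, by omega⟩⟩
  exact hatWinning_bookGraph_of_coverableIn (Nat.factorial_pos _)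
    (fun S hS => coverableIn_of_card_lt_factorial d univ (by simp) S hS) hn
end

section
/- Let d ≥ 1 be an integer. For all sufficiently large n (in terms of d), HG(B_{d,n}) = h(ℕ^d) + 1, where B_{d,n} is the book graph and h(ℕ^d) is the largest t such that every t-element subset of ℕ^d is coverable. -/
theorem Coverable.mono {d : ℕ} {S T : Set (Fin d → ℕ)} (hST : S ⊆ T) (hT : Coverable T) :
    Coverable S := by
  obtain ⟨f, hf⟩ := hT
  exact ⟨f, fun x hx y hy => hf x (hST hx) y (hST hy)⟩

/-- If all `t`-element sets are coverable, so are all finite sets with at most `t` elements. -/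
theorem coverable_of_ncard_le {d t : ℕ} (hd : 1 ≤ d)
    (ht : ∀ S : Set (Fin d → ℕ), S.Finite → S.ncard = t → Coverable S)
    {S : Set (Fin d → ℕ)} (hS : S.Finite) (hSt : S.ncard ≤ t) : Coverable S := by
  have : Nonempty (Fin d) := ⟨⟨0, hd⟩⟩
  rcases Nat.eq_zero_or_pos t with rfl | hpos
  · exact ht S hS (by omega)
  · obtain ⟨T, hST, -, hT⟩ := (Set.infinite_univ (α := Fin d → ℕ)).exists_superset_ncard_eq
      (Set.subset_univ S) hS hSt
    exact (ht T (Set.finite_of_ncard_ne_zero (by omega)) hT).mono hST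

/-- The box `{0, …, d}^d` is not coverable, by counting. -/
theorem not_coverable_box {d : ℕ} (hd : 1 ≤ d) :
    ¬ Coverable (Set.range fun (x : Fin d → Fin (d + 1)) (i : Fin d) => (x i : ℕ)) := by
  obtain ⟨k, rfl⟩ : ∃ k, d = k + 1 := ⟨d - 1, by omega⟩
  rintro ⟨f, hf⟩
  let F : (Fin (k + 1) → Fin (k + 2)) → Fin (k + 1) × (Fin k → Fin (k + 2)) := fun x =>
    (f fun i => x i, (f fun i => x i).removeNth x)
  have hF : Function.Injective F := by
    intro x y hxy
    obtain ⟨h₁, h₂⟩ := Prod.mk.inj hxy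
    by_contra hne
    have hne' : (fun i => (x i : ℕ)) ≠ fun i => (y i : ℕ) := fun h =>
      hne (funext fun i => Fin.ext (congrFun h i))
    obtain ⟨j, hj, hj'⟩ := hf _ ⟨x, rfl⟩ _ ⟨y, rfl⟩ hne' h₁
    rw [← h₁] at h₂
    obtain ⟨m, rfl⟩ := Fin.exists_succAbove_eq hj
    exact hj' (congrArg Fin.val (congrFun h₂ m))
  have hcard := Fintype.card_le_of_injective F hF
  simp only [Fintype.card_prod, Fintype.card_fun, Fintype.card_fin, pow_succ] at hcard
  have : 0 < (k + 2) ^ k := by positivity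
  nlinarith

theorem bddAbove_coverable_sizes {d : ℕ} (hd : 1 ≤ d) :
    BddAbove {t : ℕ | ∀ S : Set (Fin d → ℕ), S.Finite → S.ncard = t → Coverable S} := by
  refine ⟨(Set.range fun (x : Fin d → Fin (d + 1)) (i : Fin d) => (x i : ℕ)).ncard,
    fun t ht => le_of_not_ge fun h => not_coverable_box hd ?_⟩
  exact coverable_of_ncard_le hd ht (Set.finite_range _) h

theorem coverable_of_ncard_le_hcov {d : ℕ} (hd : 1 ≤ d) {S : Set (Fin d → ℕ)}
    (hS : S.Finite) (hSt : S.ncard ≤ hcov d) : Coverable S := by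
  refine coverable_of_ncard_le hd (Nat.sSup_mem ⟨0, fun T hT hT0 => ?_⟩
    (bddAbove_coverable_sizes hd)) hS hSt
  rw [(Set.ncard_eq_zero hT).1 hT0]
  exact ⟨fun _ => ⟨0, hd⟩, by simp⟩

theorem exists_not_coverable_of_hcov_lt {d t : ℕ} (hd : 1 ≤ d) (ht : hcov d < t) :
    ∃ S : Set (Fin d → ℕ), S.Finite ∧ S.ncard = t ∧ ¬ Coverable S := by
  by_contra! h
  exact ht.not_ge (le_csSup (bddAbove_coverable_sizes hd) h)

/-- If some set of fewer than `q` points is not coverable, then the players lose on every book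
with `q` colors: the pages can be colored so as to miss on all these points. -/
theorem not_hatWinning_bookGraph {d n q : ℕ} (hd : 1 ≤ d) {S : Set (Fin d → ℕ)}
    (hS : S.Finite) (hSq : S.ncard < q) (hnot : ¬ Coverable S) : ¬ HatWinning (bookGraph d n) q := by
  rintro ⟨g, hg⟩
  have : NeZero q := ⟨by omega⟩
  have : Nonempty (Fin d) := ⟨⟨0, hd⟩⟩
  have hrelabel : ∀ i : Fin d, ∃ e : ℕ → Fin q, Set.InjOn e ((fun x => x i) '' S) := by
    intro i
    obtain ⟨e, -, he⟩ := (hS.image fun x => x i).exists_injOn_of_encard_le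
      (t := (Set.univ : Set (Fin q))) (by
        refine (Set.encard_image_le _ _).trans ?_
        rw [← hS.cast_ncard_eq, Set.encard_univ, ENat.card_eq_coe_fintype_card, Fintype.card_fin]
        exact_mod_cast hSq.le)
    exact ⟨e, he⟩
  choose e he using hrelabel
  have hpages : ∀ v : Fin n, ∃ c : Fin q, ∀ x ∈ S, ∀ χ : Fin d ⊕ Fin n → Fin q,
      (∀ i, χ (.inl i) = e i (x i)) → g (.inr v) (fun w => χ w.1) ≠ c := by
    intro v
    let G : (Fin d → ℕ) → Fin q := fun x =>
      g (.inr v) fun w => Sum.elim (fun i => e i (x i)) (fun _ => 0) w.1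
    have hlt : (G '' S).ncard < (Set.univ : Set (Fin q)).ncard := by
      rw [Set.ncard_univ, Nat.card_fin]
      exact (Set.ncard_image_le hS).trans_lt hSq
    obtain ⟨c, -, hc⟩ := Set.exists_mem_notMem_of_ncard_lt_ncard hlt
    refine ⟨c, fun x hx χ hχ h => hc ⟨x, hx, ?_⟩⟩
    rw [← h]
    refine congrArg (g (.inr v)) (funext ?_)
    rintro ⟨i | w, hw⟩
    · exact (hχ i).symm
    · simp [bookGraph] at hw
  choose c hc using hpages
  have hspine : ∀ x ∈ S, ∃ i : Fin d,
      g (.inl i) (fun w => Sum.elim (fun i => e i (x i)) c w.1) = e i (x i) := by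
    intro x hx
    obtain ⟨i | v, hv⟩ := hg (Sum.elim (fun i => e i (x i)) c)
    · exact ⟨i, hv⟩
    · exact absurd hv (hc v x hx _ fun _ => rfl)
  choose! f hf using hspine
  refine hnot ⟨f, fun x hx y hy hxy hfxy => ?_⟩
  by_contra! hagree
  refine hxy (funext fun j => ?_)
  by_cases hj : j = f x
  · subst hj
    refine he _ ⟨x, hx, rfl⟩ ⟨y, hy, rfl⟩ ?_
    have hy' := hf y hy
    rw [← hfxy] at hy'
    rw [← hf x hx, ← hy']
    refine congrArg (g (.inl (f x))) (funext ?_)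
    rintro ⟨i | w, hw⟩
    · have hi : i ≠ f x := fun h => hw.1 (by rw [h])
      simp [hagree i hi]
    · rfl
  · exact hagree j hj

/-- If all sets of fewer than `q` points are coverable, the players win on every book with
enough pages to realize all functions from spine colorings to colors. -/
theorem hatWinning_bookGraph {d n q : ℕ} (hq : 0 < q) (hn : q ^ q ^ d ≤ n)
    (hsmall : ∀ S : Set (Fin d → ℕ), S.Finite → S.ncard < q → Coverable S) :
    HatWinning (bookGraph d n) q := by
  have : NeZero q := ⟨hq.ne'⟩
  obtain ⟨ι⟩ : Nonempty (((Fin d → Fin q) → Fin q) ↪ Fin n) :=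
    Function.Embedding.nonempty_of_card_le (by simpa using hn)
  let P : Fin n → (Fin d → Fin q) → Fin q := Function.invFun ι
  have hP : Function.Surjective P := Function.invFun_surjective ι.injective
  let S : (Fin n → Fin q) → Set (Fin d → Fin q) := fun c => {x | ∀ v, P v x ≠ c v}
  have hScard : ∀ c, (S c).ncard < q := by
    intro c
    by_contra! hle
    obtain ⟨φ, hmem, hφ⟩ := (Set.toFinite (Set.univ : Set (Fin q))).exists_injOn_of_encard_le
      (t := S c) (by
        rw [← (Set.toFinite (S c)).cast_ncard_eq, Set.encard_univ,
          ENat.card_eq_coe_fintype_card, Fintype.card_fin]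
        exact_mod_cast hle)
    have hφS : ∀ a, φ a ∈ S c := fun a => hmem (Set.mem_univ a)
    have hφ' : Function.Injective φ := Set.injOn_univ.1 hφ
    obtain ⟨v, hv⟩ := hP (Function.invFun φ)
    refine hφS (c v) v ?_
    rw [hv, Function.leftInverse_invFun hφ']
  let toNat : (Fin d → Fin q) → Fin d → ℕ := fun x i => x i
  have htoNat : Function.Injective toNat := fun x y h =>
    funext fun i => Fin.ext (congrFun h i)
  have hpart : ∀ c, ∃ f : (Fin d → Fin q) → Fin d, ∀ x ∈ S c, ∀ y ∈ S c,
      f x = f y → (∀ j, j ≠ f x → x j = y j) → x = y := by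
    intro c
    obtain ⟨f, hf⟩ := hsmall (toNat '' S c) (Set.toFinite _)
      ((Set.ncard_image_le (Set.toFinite _)).trans_lt (hScard c))
    refine ⟨f ∘ toNat, fun x hx y hy hfxy hagree => ?_⟩
    by_contra hne
    obtain ⟨j, hj, hj'⟩ := hf _ ⟨x, hx, rfl⟩ _ ⟨y, hy, rfl⟩ (htoNat.ne hne) hfxy
    exact hj' (congrArg Fin.val (hagree j hj))
  choose f hf using hpart
  have hguess : ∀ (i : Fin d) (χ : {w // (bookGraph d n).Adj (.inl i) w} → Fin q),
      ∃ a : Fin q, ∀ x c, x ∈ S c → f c x = i →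
        (∀ w, χ w = Sum.elim x c w.1) → x i = a := by
    intro i χ
    by_cases h : ∃ x c, x ∈ S c ∧ f c x = i ∧ ∀ w, χ w = Sum.elim x c w.1
    · obtain ⟨x, c, hx, hi, hχ⟩ := h
      refine ⟨x i, fun y b hy hi' hχ' => ?_⟩
      obtain rfl : c = b := funext fun v =>
        (hχ ⟨.inr v, by simp [bookGraph]⟩).symm.trans (hχ' ⟨.inr v, by simp [bookGraph]⟩)
      rw [hf c x hx y hy (hi.trans hi'.symm) fun j hj => ?_]
      have hadj : (bookGraph d n).Adj (.inl i) (.inl j) := by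
        rw [hi] at hj
        simp [bookGraph, hj.symm]
      exact (hχ ⟨.inl j, hadj⟩).symm.trans (hχ' ⟨.inl j, hadj⟩)
    · push Not at h
      refine ⟨0, fun x c hx hi hχ => ?_⟩
      obtain ⟨w, hw⟩ := h x c hx hi
      exact absurd (hχ w) hw
  choose γ hγ using hguess
  refine ⟨fun v => match v with
    | .inl i => γ i
    | .inr v => fun χ => P v fun i => χ ⟨.inl i, by simp [bookGraph]⟩, fun χ => ?_⟩
  by_cases h : (fun i => χ (.inl i)) ∈ S fun v => χ (.inr v)
  · refine ⟨.inl (f _ _), (hγ _ _ _ _ h rfl ?_).symm⟩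
    rintro ⟨i | v, hw⟩ <;> rfl
  · simp only [S, Set.mem_ofPred_eq, not_forall, not_not] at h
    obtain ⟨v, hv⟩ := h
    exact ⟨.inr v, hv⟩

/-- Lemma 5 (He–Li): for `d ≥ 1` and all sufficiently large `n`,
`HG(B_{d,n}) = h(ℕ^d) + 1`. -/
theorem hatGuessing_book_eq_hcov (d : ℕ) (hd : 1 ≤ d) :
    ∃ n₀ : ℕ, ∀ n : ℕ, n₀ ≤ n →
      hatGuessingNumber (bookGraph d n) = hcov d + 1 := by
  refine ⟨(hcov d + 1) ^ (hcov d + 1) ^ d, fun n hn => ?_⟩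
  refine IsGreatest.csSup_eq ⟨?_, fun q hq => ?_⟩
  · exact hatWinning_bookGraph (Nat.succ_pos _) hn fun S hS hlt =>
      coverable_of_ncard_le_hcov hd hS (Nat.lt_succ_iff.1 hlt)
  · by_contra! hlt
    obtain ⟨S, hS, hcard, hnot⟩ :=
      exists_not_coverable_of_hcov_lt (t := q - 1) hd (by omega)
    exact not_hatWinning_bookGraph hd hS (by omega) hnot hq
end

section
/- For every integer d ≥ 2, every subset S ⊆ {0,1,…,d−1}^{d−1} × {0,1,…,d} ⊆ ℕ^d of size d^{d−2}(d^2 + d − 1) + 1 is not coverable. -/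
/-- Side lengths of the box `{0,…,n+1}^(n+1) × {0,…,n+2}`. -/
def boxSide (n : ℕ) (j : Fin (n + 2)) : ℕ :=
  if j = Fin.last (n + 1) then n + 3 else n + 2

/-- The facet `x i = 0` of the box, whose points index the lines of the box parallel to
the `i`-th axis. -/
def boxFacet (n : ℕ) (i : Fin (n + 2)) : Finset (Fin (n + 2) → ℕ) :=
  Fintype.piFinset fun j => if j = i then {0} else Finset.range (boxSide n j)

theorem card_boxFacet (n : ℕ) (i : Fin (n + 2)) :
    (boxFacet n i).card = ∏ j, if j = i then 1 else boxSide n j := by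
  rw [boxFacet, Fintype.card_piFinset]
  refine Finset.prod_congr rfl fun j _ => ?_
  split_ifs <;> simp

theorem card_boxFacet_last (n : ℕ) :
    (boxFacet n (Fin.last (n + 1))).card = (n + 2) ^ (n + 1) := by
  simp [card_boxFacet, Fin.prod_univ_castSucc, boxSide, Fin.castSucc_ne_last]

theorem card_boxFacet_castSucc (n : ℕ) (k : Fin (n + 1)) :
    (boxFacet n k.castSucc).card = (n + 2) ^ n * (n + 3) := by
  rw [card_boxFacet, Fin.prod_univ_castSucc, Fin.prod_univ_succAbove _ k]
  simp [boxSide, Fin.castSucc_ne_last, Fin.succAbove_ne, (Fin.castSucc_ne_last k).symm]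

theorem card_sigma_boxFacet (n : ℕ) :
    (Finset.univ.sigma (boxFacet n)).card = (n + 2) ^ n * ((n + 2) ^ 2 + (n + 2) - 1) := by
  have h : (n + 2) ^ 2 + (n + 2) - 1 = n ^ 2 + 5 * n + 5 :=
    Nat.sub_eq_of_eq_add (by ring)
  simp only [Finset.card_sigma, Fin.sum_univ_castSucc, card_boxFacet_last,
    card_boxFacet_castSucc, Finset.sum_const, Finset.card_univ, Fintype.card_fin,
    smul_eq_mul, h]
  ring

/-- A coverable subset of the box has at most as many points as the box has axis-parallel
lines. -/
theorem Coverable.ncard_le_card_sigma_boxFacet {n : ℕ} {S : Set (Fin (n + 2) → ℕ)}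
    (hS : ∀ x ∈ S, ∀ j, x j < boxSide n j) (h : Coverable S) :
    S.ncard ≤ (Finset.univ.sigma (boxFacet n)).card := by
  obtain ⟨f, hf⟩ := h
  rw [← Set.ncard_coe_finset]
  refine Set.ncard_le_ncard_of_injOn
    (fun x => (⟨f x, Function.update x (f x) 0⟩ : Σ _ : Fin (n + 2), Fin (n + 2) → ℕ))
    ?_ ?_ (Finset.finite_toSet _)
  · intro x hx
    simp only [Finset.coe_sigma, Set.mem_sigma_iff, Finset.coe_univ, Set.mem_univ, true_and,
      Finset.mem_coe, boxFacet, Fintype.mem_piFinset]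
    intro j
    by_cases hj : j = f x
    · simp [hj]
    · simpa [hj] using hS x hx j
  · intro x hx y hy hxy
    by_contra hne
    simp only [Sigma.mk.injEq, heq_eq_eq] at hxy
    obtain ⟨hfxy, hupd⟩ := hxy
    obtain ⟨j, hj, hxyj⟩ := hf x hx y hy hne hfxy
    have hupdj := congrFun hupd j
    rw [← hfxy, Function.update_of_ne hj, Function.update_of_ne hj] at hupdj
    exact hxyj hupdj

/-- Every subset of `{0,…,d-1}^(d-1) × {0,…,d} ⊆ ℕ^d` of size
`d^(d-2)(d^2+d-1) + 1` is not coverable. -/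
theorem not_coverable_of_box (d : ℕ) (hd : 2 ≤ d) (S : Set (Fin d → ℕ))
    (hS : ∀ x ∈ S, (∀ i : Fin d, (i : ℕ) < d - 1 → x i < d) ∧ x ⟨d - 1, by omega⟩ ≤ d)
    (hcard : S.ncard = d ^ (d - 2) * (d ^ 2 + d - 1) + 1) :
    ¬ Coverable S := by
  obtain ⟨n, rfl⟩ := Nat.exists_eq_add_of_le' hd
  intro h
  have hbox : ∀ x ∈ S, ∀ j, x j < boxSide n j := by
    intro x hx j
    obtain ⟨hinit, hlast⟩ := hS x hx
    unfold boxSide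
    split_ifs with hj
    · subst hj
      exact Nat.lt_succ_of_le hlast
    · exact hinit j (Fin.val_lt_last hj)
  have hle := h.ncard_le_card_sigma_boxFacet hbox
  rw [card_sigma_boxFacet, hcard, Nat.add_sub_cancel] at hle
  omega
end

section
/- Every subset of ℕ^2 of size 5 is coverable; that is, for every S ⊆ ℕ^2 with |S| = 5, there is a partition S = S_1 ⊔ S_2 such that no two distinct points of S_1 share the same second coordinate and no two distinct points of S_2 share the same first coordinate. -/
/-- A finite planar set whose projections have sizes `a` and `b` has at most `a * b` points. -/
lemma card_le_card_image_mul_card_image (A : Finset (Fin 2 → ℕ)) :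
    A.card ≤ (A.image (fun x => x 1)).card * (A.image (fun x => x 0)).card := by
  rw [← Finset.card_product]
  refine Finset.card_le_card_of_injOn (fun x => (x 1, x 0)) ?_ ?_
  · intro x hx
    simp only [Finset.coe_product, Set.mem_prod, Finset.mem_coe]
    exact ⟨Finset.mem_image_of_mem _ hx, Finset.mem_image_of_mem _ hx⟩
  · intro x _ y _ h
    simp only [Prod.mk.injEq] at h
    ext i
    fin_cases i
    · exact h.2
    · exact h.1

/-- At most five points of the plane meet at least as many axis-parallel lines. -/
lemma card_le_card_image_add_card_image {A : Finset (Fin 2 → ℕ)} (hA : A.card ≤ 5) :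
    A.card ≤ (A.image (fun x => x 1)).card + (A.image (fun x => x 0)).card := by
  have h := card_le_card_image_mul_card_image A
  generalize (A.image (fun x => x 1)).card = a at *
  generalize (A.image (fun x => x 0)).card = b at *
  by_contra! hlt
  have ha : a ≤ 4 := by omega
  have hb : b ≤ 4 := by omega
  interval_cases a <;> interval_cases b <;> omega

/-- If distinct points of `S` can be assigned distinct axis-parallel lines through them,
then `S` is coverable. -/
lemma coverable_of_injective_lines {S : Set (Fin 2 → ℕ)} (g : S → ℕ ⊕ ℕ)
    (hg : Function.Injective g)
    (hmem : ∀ x : S, g x = Sum.inl (x.1 1) ∨ g x = Sum.inr (x.1 0)) : Coverable S := by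
  classical
  refine ⟨fun x => if hx : x ∈ S then (if (g ⟨x, hx⟩).isLeft then 0 else 1) else 0, ?_⟩
  intro x hx y hy hxy hf
  have hne : g ⟨x, hx⟩ ≠ g ⟨y, hy⟩ := fun h => hxy (congrArg Subtype.val (hg h))
  simp only [dif_pos hx, dif_pos hy] at hf ⊢
  rcases hmem ⟨x, hx⟩ with h₁ | h₁ <;> rcases hmem ⟨y, hy⟩ with h₂ | h₂ <;>
    rw [h₁, h₂] at hne <;> simp [h₁, h₂] at hf hne ⊢ <;> exact hne

/-- Every subset of `ℕ^2` of size `5` is coverable. -/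
theorem coverable_of_card_five (S : Set (Fin 2 → ℕ)) (hfin : S.Finite)
    (hcard : S.ncard = 5) :
    Coverable S := by
  classical
  let lines : S → Finset (ℕ ⊕ ℕ) := fun x => {Sum.inl (x.1 1), Sum.inr (x.1 0)}
  have hall : ∀ s : Finset S, s.card ≤ (s.biUnion lines).card := by
    intro s
    set A := s.map (Function.Embedding.subtype (· ∈ S))
    have hs : A.card = s.card := Finset.card_map _
    have hA5 : A.card ≤ 5 := by
      rw [← hcard, ← Set.ncard_coe_finset]
      refine Set.ncard_le_ncard ?_ hfin
      intro x hx
      obtain ⟨y, -, rfl⟩ := Finset.mem_map.mp hx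
      exact y.2
    rw [← hs]
    refine (card_le_card_image_add_card_image hA5).trans ?_
    rw [← Finset.card_disjSum]
    refine Finset.card_le_card ?_
    intro l hl
    rcases Finset.mem_disjSum.mp hl with ⟨c, hc, rfl⟩ | ⟨c, hc, rfl⟩ <;>
    · obtain ⟨x, hx, rfl⟩ := Finset.mem_image.mp hc
      obtain ⟨y, hy, rfl⟩ := Finset.mem_map.mp hx
      exact Finset.mem_biUnion.mpr ⟨y, hy, by simp [lines]⟩
  obtain ⟨g, hg, hmem⟩ := (Finset.all_card_le_biUnion_card_iff_exists_injective lines).mp hall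
  exact coverable_of_injective_lines g hg fun x => by simpa [lines] using hmem x
end

section
/- Sylvester's sequence, defined by s_0 = 2 and s_n = s_{n−1}^2 − s_{n−1} + 1 for n ≥ 1, satisfies s_n = s_0 · s_1 ⋯ s_{n−1} + 1 for all n ≥ 1; consequently s_d − 1 ≥ 2^{2^{d−1}} for all d ≥ 1, so for each d ≥ 1 there exists a d-degenerate graph G with HG(G) ≥ 2^{2^{d−1}}. -/
/-- The recursion satisfied by `s_n - 1`, where `s_n` is Sylvester's sequence. -/
def pronic (s : ℕ) : ℕ := s * (s + 1)

theorem sylvester_eq_iterate_pronic (n : ℕ) : sylvester n = pronic^[n] 1 + 1 := by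
  induction n with
  | zero => rfl
  | succ n ih =>
    rw [sylvester, ih, Function.iterate_succ_apply', pronic]
    have h : (pronic^[n] 1 + 1) ^ 2 =
        pronic^[n] 1 * (pronic^[n] 1 + 1) + (pronic^[n] 1 + 1) := by ring
    omega

theorem sylvester_eq_prod_add_one (n : ℕ) :
    sylvester n = (∏ k ∈ Finset.range n, sylvester k) + 1 := by
  rw [sylvester_eq_iterate_pronic, Nat.add_right_cancel_iff]
  induction n with
  | zero => rfl
  | succ n ih =>
    rw [Finset.prod_range_succ, ← ih, Function.iterate_succ_apply', pronic,
      sylvester_eq_iterate_pronic]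

theorem two_pow_two_pow_le_iterate_pronic (n : ℕ) : 2 ^ 2 ^ n ≤ pronic^[n + 1] 1 := by
  induction n with
  | zero => simp [pronic]
  | succ n ih =>
    rw [Function.iterate_succ_apply', pronic, pow_succ, pow_mul, sq]
    exact Nat.mul_le_mul ih (ih.trans (Nat.le_succ _))

/-- The hat guessing game in which every vertex makes `s` guesses. The guesses are functions of
the whole coloring that depend only on the colors of the neighbors. -/
def MultiHatWinning {V : Type*} (G : SimpleGraph V) (q s : ℕ) : Prop :=
  ∃ g : V → (V → Fin q) → Fin s → Fin q,
    (∀ v χ χ', (∀ w, G.Adj v w → χ w = χ' w) → g v χ = g v χ') ∧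
    ∀ χ : V → Fin q, ∃ v k, g v χ k = χ v

theorem MultiHatWinning.comap {V W : Type*} {G : SimpleGraph V} {q s : ℕ}
    (h : MultiHatWinning G q s) (e : W ≃ V) : MultiHatWinning (G.comap e) q s := by
  obtain ⟨g, hloc, hwin⟩ := h
  refine ⟨fun w χ => g (e w) (χ ∘ e.symm), fun w χ χ' hχ => ?_, fun χ => ?_⟩
  · refine hloc _ _ _ fun v hv => hχ _ ?_
    simpa using hv
  · obtain ⟨v, k, hk⟩ := hwin (χ ∘ e.symm)
    exact ⟨e.symm v, k, by simpa using hk⟩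

theorem MultiHatWinning.hatWinning {V : Type*} {G : SimpleGraph V} {q : ℕ}
    (h : MultiHatWinning G q 1) (hq : 0 < q) : HatWinning G q := by
  classical
  obtain ⟨g, hloc, hwin⟩ := h
  refine ⟨fun v c => g v (fun w => if hw : G.Adj v w then c ⟨w, hw⟩ else ⟨0, hq⟩) 0,
    fun χ => ?_⟩
  obtain ⟨v, k, hk⟩ := hwin χ
  refine ⟨v, ?_⟩
  rw [← hk, Subsingleton.elim k 0]
  refine congrFun (hloc _ _ _ fun w hw => ?_) 0
  simp [hw]

/-- The number of colors in a won game is at most the number of vertices. -/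
theorem HatWinning.le_card {V : Type*} [Fintype V] {G : SimpleGraph V} {q : ℕ}
    (h : HatWinning G q) : q ≤ Fintype.card V := by
  classical
  rcases Nat.eq_zero_or_pos q with rfl | hq
  · exact Nat.zero_le _
  obtain ⟨g, hwin⟩ := h
  choose v hv using hwin
  have hinj : Function.Injective
      (fun p : Fin q × (V → Fin q) => (v p.2, Function.update p.2 (v p.2) p.1)) := by
    rintro ⟨c, χ⟩ ⟨c', χ'⟩ hp
    obtain ⟨hvv, hu⟩ := Prod.mk.inj hp
    dsimp only at hvv hu
    have hoff : ∀ w, w ≠ v χ → χ w = χ' w := fun w hw => by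
      simpa [hw, ← hvv] using congrFun hu w
    have hat : χ (v χ) = χ' (v χ) := by
      have h1 := hv χ
      have h2 := hv χ'
      rw [← hvv] at h2
      rw [← h1, ← h2]
      congr 1
      funext w
      exact hoff _ (G.ne_of_adj w.2).symm
    have hc : c = c' := by simpa [← hvv] using congrFun hu (v χ)
    refine Prod.ext hc (funext fun w => ?_)
    by_cases hw : w = v χ
    · rw [hw]
      exact hat
    · exact hoff w hw
  have hcard := Fintype.card_le_of_injective _ hinj
  rw [Fintype.card_prod, Fintype.card_prod, Fintype.card_fin] at hcard
  exact Nat.le_of_mul_le_mul_right hcard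
    (Fintype.card_pos_iff.mpr ⟨fun _ => ⟨0, hq⟩⟩)

/-- A vertex joined to `m` disjoint copies of `G`. -/
def coneCopies {V : Type*} (G : SimpleGraph V) (m : ℕ) :
    SimpleGraph (WithBot (Fin m ×ₗ V)) where
  Adj
    | ⊥, ⊥ => False
    | ⊥, (_ : Fin m ×ₗ V) => True
    | (_ : Fin m ×ₗ V), ⊥ => True
    | (x : Fin m ×ₗ V), (y : Fin m ×ₗ V) =>
      (ofLex x).1 = (ofLex y).1 ∧ G.Adj (ofLex x).2 (ofLex y).2
  symm := by
    constructor
    rintro (_ | x) (_ | y) h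
    · exact h
    · trivial
    · trivial
    · exact ⟨h.1.symm, h.2.symm⟩
  loopless := by
    constructor
    rintro (_ | x) h
    · exact h
    · exact G.loopless.irrefl _ h.2

theorem ncard_lt_adj_coneCopies_le {V : Type*} [Fintype V] [LinearOrder V] {G : SimpleGraph V}
    {d : ℕ} (hG : ∀ v, {w | w < v ∧ G.Adj w v}.ncard ≤ d) (m : ℕ)
    (v : WithBot (Fin m ×ₗ V)) : {w | w < v ∧ (coneCopies G m).Adj w v}.ncard ≤ d + 1 := by
  induction v with
  | bot => simp
  | coe x =>
    let f : V → WithBot (Fin m ×ₗ V) := fun w => ↑(toLex ((ofLex x).1, w))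
    have hsub : {w | w < ↑x ∧ (coneCopies G m).Adj w ↑x} ⊆
        insert ⊥ (f '' {w | w < (ofLex x).2 ∧ G.Adj w (ofLex x).2}) := by
      intro w hw
      induction w with
      | bot => exact Set.mem_insert _ _
      | coe y =>
        obtain ⟨hlt, hfst, hadj⟩ := hw
        refine Set.mem_insert_of_mem _ ⟨(ofLex y).2, ⟨?_, hadj⟩, ?_⟩
        · rw [WithBot.coe_lt_coe, Prod.Lex.lt_iff] at hlt
          rcases hlt with hlt | hlt
          · exact absurd hfst hlt.ne
          · exact hlt.2
        · simp only [f, ← hfst]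
          rfl
    refine (Set.ncard_le_ncard hsub ((Set.toFinite _).insert _)).trans ?_
    refine (Set.ncard_insert_le _ _).trans (Nat.add_le_add_right ?_ 1)
    exact (Set.ncard_image_le (Set.toFinite _)).trans (hG _)

theorem exists_fin_range_of_card_le {α : Type*} [Nonempty α] {s : ℕ} (S : Finset α)
    (hS : S.card ≤ s) : ∃ f : Fin s → α, ∀ a ∈ S, ∃ k, f k = a := by
  classical
  refine ⟨fun k => if hk : k.1 < S.card then S.equivFin.symm ⟨k, hk⟩ else Classical.arbitrary α,
    fun a ha => ⟨Fin.castLE hS (S.equivFin ⟨a, ha⟩), ?_⟩⟩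
  simp

/-- If `s * (s + 1)` guesses win on `G`, then `s` guesses win on the cone over enough copies
of `G`: the copies are indexed by the injections `T : Fin (s + 1) ↪ Fin q`, and the copy
indexed by `T` rules out at least one of the colors in the range of `T` for the apex. -/
theorem MultiHatWinning.coneCopies {V : Type*} {G : SimpleGraph V} {q s : ℕ} (hq : 0 < q)
    (h : MultiHatWinning G q (pronic s)) :
    ∃ m, MultiHatWinning (coneCopies G m) q s := by
  classical
  have : Nonempty (Fin q) := ⟨⟨0, hq⟩⟩
  obtain ⟨g, hloc, hwin⟩ := h
  let T := (Fintype.equivFin (Fin (s + 1) ↪ Fin q)).symm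
  let m := Fintype.card (Fin (s + 1) ↪ Fin q)
  let leaf : Fin m ×ₗ V → (V → Fin q) → Fin q → Fin s → Fin q := fun x χ a k =>
    g (ofLex x).2 χ (finProdFinEquiv (k, Function.invFun (T (ofLex x).1) a))
  let res : (WithBot (Fin m ×ₗ V) → Fin q) → Fin m → V → Fin q := fun χ i w =>
    χ ↑(toLex (i, w) : Fin m ×ₗ V)
  let S : (WithBot (Fin m ×ₗ V) → Fin q) → Finset (Fin q) := fun χ =>
    Finset.univ.filter fun a => ∀ x k, leaf x (res χ (ofLex x).1) a k ≠ χ ↑x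
  have hS : ∀ χ, (S χ).card ≤ s := by
    intro χ
    by_contra! hlt
    obtain ⟨U, hU, hUc⟩ := Finset.exists_subset_card_eq (Nat.succ_le_of_lt hlt)
    let t : Fin (s + 1) ↪ Fin q := (U.orderEmbOfFin hUc).toEmbedding
    obtain ⟨v, k, hk⟩ := hwin (res χ (T.symm t))
    obtain ⟨⟨j, i⟩, rfl⟩ := finProdFinEquiv.surjective k
    have hmem : t i ∈ S χ := hU (U.orderEmbOfFin_mem hUc i)
    refine (Finset.mem_filter.mp hmem).2 (toLex (T.symm t, v)) j ?_
    simp only [leaf, ofLex_toLex, Equiv.apply_symm_apply,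
      Function.leftInverse_invFun t.injective i]
    exact hk
  let F : Finset (Fin q) → Fin s → Fin q := fun A =>
    if hA : A.card ≤ s then (exists_fin_range_of_card_le A hA).choose else fun _ => ⟨0, hq⟩
  have hF : ∀ A : Finset (Fin q), A.card ≤ s → ∀ a ∈ A, ∃ k, F A k = a := fun A hA => by
    simpa only [F, dif_pos hA] using (exists_fin_range_of_card_le A hA).choose_spec
  refine ⟨m, fun v χ => match v with
    | ⊥ => F (S χ)
    | (x : Fin m ×ₗ V) => leaf x (res χ (ofLex x).1) (χ ⊥), ?_, fun χ => ?_⟩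
  · rintro (_ | x) χ χ' hχ
    · have : S χ = S χ' := by
        have hcoe : ∀ y : Fin m ×ₗ V, χ ↑y = χ' ↑y := fun y => hχ ↑y trivial
        simp only [S, res, hcoe]
      exact congrArg F this
    · have hbot : χ ⊥ = χ' ⊥ := hχ ⊥ trivial
      funext k
      change leaf x _ _ k = leaf x _ _ k
      rw [hbot]
      exact congrFun (hloc _ _ _ fun w hw =>
        hχ ↑(toLex ((ofLex x).1, w) : Fin m ×ₗ V) ⟨rfl, hw⟩) _
  · by_cases hbot : χ ⊥ ∈ S χ
    · obtain ⟨k, hk⟩ := hF _ (hS χ) _ hbot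
      exact ⟨⊥, k, hk⟩
    · simp only [S, Finset.mem_filter, Finset.mem_univ, true_and, not_forall, not_not] at hbot
      obtain ⟨x, k, hk⟩ := hbot
      exact ⟨↑x, k, hk⟩

theorem iterate_pronic_pos (d : ℕ) {s : ℕ} (hs : 0 < s) : 0 < pronic^[d] s := by
  induction d generalizing s with
  | zero => exact hs
  | succ d ih => exact ih (Nat.mul_pos hs s.succ_pos)

/-- There is a `d`-degenerate graph on which `s` guesses win against `pronic^[d] s` colors. -/
theorem exists_degenerate_multiHatWinning (d : ℕ) {s : ℕ} (hs : 0 < s) :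
    ∃ (V : Type) (_ : Fintype V) (_ : LinearOrder V) (G : SimpleGraph V),
      (∀ v, {w | w < v ∧ G.Adj w v}.ncard ≤ d) ∧ MultiHatWinning G (pronic^[d] s) s := by
  induction d generalizing s with
  | zero =>
    exact ⟨Unit, inferInstance, inferInstance, ⊥, by simp, fun _ _ => id,
      fun _ _ _ _ => rfl, fun χ => ⟨(), χ (), rfl⟩⟩
  | succ d ih =>
    obtain ⟨V, _, _, G, hdeg, hwin⟩ := ih (s := pronic s) (Nat.mul_pos hs s.succ_pos)
    obtain ⟨m, hm⟩ := hwin.coneCopies (iterate_pronic_pos (d + 1) hs)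
    have : Fintype (Fin m ×ₗ V) := inferInstanceAs (Fintype (Fin m × V))
    exact ⟨_, inferInstanceAs (Fintype (Option (Fin m ×ₗ V))), inferInstance, coneCopies G m,
      ncard_lt_adj_coneCopies_le hdeg m, hm⟩

/-- Sylvester's sequence satisfies `s_n = s_0 ⋯ s_{n-1} + 1`, hence
`s_d - 1 ≥ 2^(2^(d-1))` for `d ≥ 1`, and so for each `d ≥ 1` there is a
`d`-degenerate graph `G` with `HG(G) ≥ 2^(2^(d-1))`. -/
theorem sylvester_product_and_degenerate_lower :
    (∀ n : ℕ, 1 ≤ n → sylvester n = (∏ k ∈ Finset.range n, sylvester k) + 1) ∧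
    (∀ d : ℕ, 1 ≤ d → 2 ^ 2 ^ (d - 1) ≤ sylvester d - 1) ∧
    (∀ d : ℕ, 1 ≤ d → ∃ (n : ℕ) (G : SimpleGraph (Fin n)),
      (∀ i : Fin n, {j : Fin n | j < i ∧ G.Adj j i}.ncard ≤ d) ∧
      2 ^ 2 ^ (d - 1) ≤ hatGuessingNumber G) := by
  have hbound : ∀ d : ℕ, 1 ≤ d → 2 ^ 2 ^ (d - 1) ≤ pronic^[d] 1 := fun d hd => by
    simpa only [Nat.sub_add_cancel hd] using two_pow_two_pow_le_iterate_pronic (d - 1)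
  refine ⟨fun n _ => sylvester_eq_prod_add_one n, fun d hd => ?_, fun d hd => ?_⟩
  · rw [sylvester_eq_iterate_pronic, Nat.add_sub_cancel]
    exact hbound d hd
  · obtain ⟨V, _, _, G, hdeg, hwin⟩ := exists_degenerate_multiHatWinning d one_pos
    let e : Fin (Fintype.card V) ≃o V := monoEquivOfFin V rfl
    refine ⟨_, G.comap e, fun i => ?_, (hbound d hd).trans (le_csSup ?_ ?_)⟩
    · refine le_trans ?_ (hdeg (e i))
      refine Set.ncard_le_ncard_of_injOn e (fun j hj => ⟨e.lt_iff_lt.mpr hj.1, hj.2⟩)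
        e.injective.injOn (Set.toFinite _)
    · exact ⟨_, fun q hq => hq.le_card⟩
    · exact (hwin.comap e.toEquiv).hatWinning (iterate_pronic_pos d one_pos)
end
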